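/- Let P be a plurisubharmonic, non-pluriharmonic real polynomial on C², homogeneous of degree 2k, with no pluriharmonic terms, and assume the Levi-degeneracy set w(P) possesses Property (B). Then (1) there exist a subharmonic homogeneous real polynomial U on C and a holomorphic homogeneous polynomial F on C² such that P(z₁,z₂) = U(F(z₁,z₂)); and (2) writing F⁻¹{0} = L₁ ∪ … ∪ L_N as a union of complex lines through 0, there exists a C^∞-smooth function H ≥ 0 on C² such that (a) H⁻¹{0} = ∪_{j=1}^{N} L_j and (b) P − δH is plurisubharmonic on C² for every δ with 0 < δ ≤ 1. -/

import Mathlib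

/-!
# Homogeneous plurisubharmonic polynomials with Property (B)

**Factorisation.** Write `P(z) = T(z, z̄)` with `T(z, w)` a polynomial on `ℂ² × ℂ²` (the
polarisation, `ev Q`). Along a level curve of the entire function `H` of Property (B) the polynomial
`P` is harmonic, so at every point the tangent vector `(-∂₂H, ∂₁H)` is a null vector of the
nonnegative Levi form (`lev_tangent`), hence lies in the kernel of the complex Hessian
(`null_dir_kernel`). Both sides of the resulting equations are holomorphic in `z` and `z̄`, so they
persist with `z̄` replaced by an independent variable `w` (`polar_kernel`). If `H` is constant, the
whole Levi form vanishes and the kernel equations hold with constant coefficients (`exists_kernel`).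

Let `T_b` be the part of `T` of degree `b` in `w`. Since `b ≥ 1`, Euler's identity in `w` turns the
kernel equations into `∂₁T_b · h₂ = ∂₂T_b · h₁` (`conjPart_kernel`), and Euler's identity in `z`
then shows that the `T_b(·, w)`, for all `b` and `w`, have proportional logarithmic derivatives
(`conjPart_log_deriv`). After dehomogenising to one variable, polynomials so related are scalar
multiples of powers of a single one, the member of least positive weight (`exists_common_root`).
Thus `T_b(z, w) = c F(z)^s` for one homogeneous `F` of degree `d`, with `c` and `s` depending on `b`
and `w` (`exists_factor`). So `T(z, w)` depends on `z` only through `F(z)`, and by Hermitian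
symmetry `P` does as well: `P = U ∘ F`. Restricting to a complex line on which `F` is `c ↦ c^d`, and
using invariance under `d`-th roots of unity, shows that `U` is a polynomial in `ξ, ξ̄`
(`exists_U`); the same line shows that `U` is subharmonic (`U_subharmonic`).

**Bumping.** The zeros of `ΔU` on the unit circle form a finite set `Z` (`finite_zeros`). For the
finite set `S` of the squares of the points of `Z`, the polynomial
`g(w) = |w|^{2j} ∏_{s ∈ S} (|w|² - Re (w² s̄))` is nonnegative, and on `Z` it vanishes with `Δg > 0`
(`exists_g`). Hence for small `ε` the homogeneous function
`h = (ε|w|^{2ρ} - g)² + ε²|w|^{4ρ}`, positive off the origin, has `Δh < 0` on `Z` (`exists_h`). By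
compactness of the circle and homogeneity, `Δh ≤ C |w|^m ΔU`, and since `h` grows like `|w|^{4ρ}`,
a small multiple `κ` of `h / (1 + h)` satisfies `Δκ ≤ ΔU` everywhere (`exists_bump`). Then
`κ ∘ F` is the required function: the Levi form of `P - δ κ ∘ F` is `|dF|²` times a quarter of
`ΔU - δ Δκ ≥ 0`.
-/

open Complex ComplexConjugate Metric Set

noncomputable section

/-- Wirtinger derivative `∂f` in the complex direction `e`. -/
def wd (f : ℂ × ℂ → ℂ) (e : ℂ × ℂ) (z : ℂ × ℂ) : ℂ :=
  (1 / 2) * (fderiv ℝ f z e - Complex.I * fderiv ℝ f z (Complex.I • e))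

/-- Conjugate Wirtinger derivative `∂̄f` in the complex direction `e`. -/
def wdbar (f : ℂ × ℂ → ℂ) (e : ℂ × ℂ) (z : ℂ × ℂ) : ℂ :=
  (1 / 2) * (fderiv ℝ f z e + Complex.I * fderiv ℝ f z (Complex.I • e))

/-- Mixed second derivative `∂²P/∂z_(ej)∂z̄_(ek)` of a real-valued function. -/
def mixedDeriv (P : ℂ × ℂ → ℝ) (ej ek : ℂ × ℂ) (z : ℂ × ℂ) : ℂ :=
  wd (wdbar (fun w => (P w : ℂ)) ek) ej z

/-- The Levi form of `P` at `z` in the direction `v`. -/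
def leviForm (P : ℂ × ℂ → ℝ) (z v : ℂ × ℂ) : ℂ :=
  mixedDeriv P (1, 0) (1, 0) z * v.1 * conj v.1 +
  mixedDeriv P (1, 0) (0, 1) z * v.1 * conj v.2 +
  mixedDeriv P (0, 1) (1, 0) z * v.2 * conj v.1 +
  mixedDeriv P (0, 1) (0, 1) z * v.2 * conj v.2

/-- `P` is plurisubharmonic on all of `ℂ²`. -/
def IsPsh (P : ℂ × ℂ → ℝ) : Prop := ∀ z v, 0 ≤ (leviForm P z v).re

/-- `P` is strictly plurisubharmonic at `z`. -/
def IsStrictPshAt (P : ℂ × ℂ → ℝ) (z : ℂ × ℂ) : Prop :=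
  ∀ v, v ≠ 0 → 0 < (leviForm P z v).re

/-- The Levi-degeneracy set of `P`. -/
def leviDegen (P : ℂ × ℂ → ℝ) : Set (ℂ × ℂ) :=
  {z | ¬ IsStrictPshAt P z}

/-- One-variable Wirtinger derivative. -/
def wd1 (f : ℂ → ℂ) (z : ℂ) : ℂ :=
  (1 / 2) * (fderiv ℝ f z 1 - Complex.I * fderiv ℝ f z Complex.I)

def wdbar1 (f : ℂ → ℂ) (z : ℂ) : ℂ :=
  (1 / 2) * (fderiv ℝ f z 1 + Complex.I * fderiv ℝ f z Complex.I)

/-- The Laplacian of a function on `ℂ`, as `4 ∂∂̄`. -/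
def lap (u : ℂ → ℝ) (z : ℂ) : ℂ := 4 * wd1 (wdbar1 fun w => (u w : ℂ)) z

def IsHarmonic (u : ℂ → ℝ) : Prop := ∀ z, lap u z = 0

def Subharmonic (u : ℂ → ℝ) : Prop := ∀ z, 0 ≤ (lap u z).re

/-- The Laplacian of a function on `ℂ² ≅ ℝ⁴`. -/
def lap2 (P : ℂ × ℂ → ℝ) (z : ℂ × ℂ) : ℂ :=
  4 * (mixedDeriv P (1, 0) (1, 0) z + mixedDeriv P (0, 1) (0, 1) z)

/-- `P` is a real-valued polynomial in `z₁, z̄₁, z₂, z̄₂`. -/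
def IsRealPoly2 (P : ℂ × ℂ → ℝ) : Prop :=
  ∃ Q : MvPolynomial (Fin 4) ℂ,
    ∀ z : ℂ × ℂ, (P z : ℂ) = MvPolynomial.eval ![z.1, conj z.1, z.2, conj z.2] Q

/-- `u` is a real-valued polynomial in `z, z̄`. -/
def IsRealPoly1 (u : ℂ → ℝ) : Prop :=
  ∃ Q : MvPolynomial (Fin 2) ℂ,
    ∀ z : ℂ, (u z : ℂ) = MvPolynomial.eval ![z, conj z] Q

/-- `F` is a holomorphic polynomial map on `ℂ²`. -/
def IsPolyMap2 (F : ℂ × ℂ → ℂ) : Prop :=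
  ∃ Q : MvPolynomial (Fin 2) ℂ, ∀ z : ℂ × ℂ, F z = MvPolynomial.eval ![z.1, z.2] Q

/-- `P` has no pluriharmonic terms: in its (unique) monomial expansion in
`z₁, z̄₁, z₂, z̄₂` every monomial involves both a conjugated and an
unconjugated variable. Indexing: `0 ↦ z₁`, `1 ↦ z̄₁`, `2 ↦ z₂`, `3 ↦ z̄₂`. -/
def NoPluriharmonicTerms (P : ℂ × ℂ → ℝ) : Prop :=
  ∃ Q : MvPolynomial (Fin 4) ℂ,
    (∀ z : ℂ × ℂ, (P z : ℂ) = MvPolynomial.eval ![z.1, conj z.1, z.2, conj z.2] Q) ∧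
    ∀ m ∈ Q.support, (m 1 ≠ 0 ∨ m 3 ≠ 0) ∧ (m 0 ≠ 0 ∨ m 2 ≠ 0)

/-- `P` is pluriharmonic: the real part of an entire function. -/
def IsPluriharmonic (P : ℂ × ℂ → ℝ) : Prop :=
  ∃ f : ℂ × ℂ → ℂ, Differentiable ℂ f ∧ ∀ z, P z = (f z).re

/-- `P` is homogeneous of degree `d`. -/
def HomogeneousDeg (P : ℂ × ℂ → ℝ) (d : ℕ) : Prop :=
  ∀ t : ℝ, 0 < t → ∀ z : ℂ × ℂ, P (t • z) = t ^ d * P z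

/-- The directions `ζ` such that `P` is harmonic along the line `{(ζw, w)}`. -/
def harmDirs (P : ℂ × ℂ → ℝ) : Set ℂ := {ζ | IsHarmonic fun w => P (ζ * w, w)}

/-- The union of all complex lines through `0` along which `P` is harmonic. -/
def linesUnion (P : ℂ × ℂ → ℝ) : Set (ℂ × ℂ) :=
  {z | (∃ ζ ∈ harmDirs P, z.1 = ζ * z.2) ∨
       (IsHarmonic (fun w => P (w, 0)) ∧ z.2 = 0)}

/-- `P` is harmonic along the smooth part of the set `V`: for every injective
holomorphic parametrization by the unit disc of a piece of `V`, the pullback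
of `P` is harmonic. -/
def HarmonicAlong (P : ℂ × ℂ → ℝ) (V : Set (ℂ × ℂ)) : Prop :=
  ∀ φ : ℂ → ℂ × ℂ, DifferentiableOn ℂ φ (Metric.ball 0 1) →
    Set.InjOn φ (Metric.ball 0 1) → φ '' Metric.ball 0 1 ⊆ V →
    ∀ ζ ∈ Metric.ball (0 : ℂ) 1, lap (fun w => P (φ w)) ζ = 0

/-- `S` contains no complex-analytic subvariety of positive dimension. -/
def NoPosDimVariety (S : Set (ℂ × ℂ)) : Prop :=
  ∀ φ : ℂ → ℂ × ℂ, DifferentiableOn ℂ φ (Metric.ball 0 1) →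
    φ '' Metric.ball 0 1 ⊆ S →
    ∀ x ∈ Metric.ball (0 : ℂ) 1, ∀ y ∈ Metric.ball (0 : ℂ) 1, φ x = φ y

/-- Property (A) for a homogeneous polynomial `P`. -/
def PropertyA (P : ℂ × ℂ → ℝ) : Prop :=
  NoPosDimVariety (leviDegen P \ linesUnion P) ∧
  ∃ W : Set (ℂ × ℂ), IsClosed W ∧ (∀ z ∈ W, ∀ t : ℝ, 0 < t → t • z ∈ W) ∧
    leviDegen P \ linesUnion P ⊆ W ∧ interior W ∩ linesUnion P = ∅

/-- Property (B): there is an entire function all of whose level curves have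
smooth part along which `P` is harmonic. -/
def PropertyB (P : ℂ × ℂ → ℝ) : Prop :=
  ∃ H : ℂ × ℂ → ℂ, Differentiable ℂ H ∧ ∀ c : ℂ, HarmonicAlong P (H ⁻¹' {c})

/-- The anisotropic dilation `(t^{1/m₁}z₁, t^{1/m₂}z₂)`. -/
def wdil (m₁ m₂ : ℕ) (t : ℝ) (z : ℂ × ℂ) : ℂ × ℂ :=
  (((t ^ ((m₁ : ℝ)⁻¹) : ℝ) : ℂ) * z.1, ((t ^ ((m₂ : ℝ)⁻¹) : ℝ) : ℂ) * z.2)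

/-- `(m₁,m₂)`-homogeneity with weight `r`. -/
def WHomog (m₁ m₂ : ℕ) (P : ℂ × ℂ → ℝ) (r : ℝ) : Prop :=
  ∀ t : ℝ, 0 < t → ∀ z : ℂ × ℂ, P (wdil m₁ m₂ t z) = t ^ r * P z

/-- The weighted curve `{z₁^a = ζ z₂^b}`. -/
def wCurve (a b : ℕ) (ζ : ℂ) : Set (ℂ × ℂ) := {z | z.1 ^ a = ζ * z.2 ^ b}

/-- The parameters `ζ ∈ ℂ` of weighted curves along which `P` is harmonic. -/
def wHarmDirs (P : ℂ × ℂ → ℝ) (a b : ℕ) : Set ℂ :=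
  {ζ | HarmonicAlong P (wCurve a b ζ)}

/-- The union of all curves in `E(P)` (including the one for `ζ = ∞`). -/
def wEUnion (P : ℂ × ℂ → ℝ) (a b : ℕ) : Set (ℂ × ℂ) :=
  {z | (∃ ζ ∈ wHarmDirs P a b, z.1 ^ a = ζ * z.2 ^ b) ∨
       (HarmonicAlong P {w : ℂ × ℂ | w.2 = 0} ∧ z.2 = 0)}

/-- Property (A) in the `(m₁,m₂)`-homogeneous setting (with wedges). -/
def PropertyAW (m₁ m₂ : ℕ) (P : ℂ × ℂ → ℝ) : Prop :=
  NoPosDimVariety (leviDegen P \ wEUnion P (m₁ / Nat.gcd m₁ m₂) (m₂ / Nat.gcd m₁ m₂)) ∧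
  ∃ W : Set (ℂ × ℂ), IsClosed W ∧ (∀ z ∈ W, ∀ t : ℝ, 0 < t → wdil m₁ m₂ t z ∈ W) ∧
    leviDegen P \ wEUnion P (m₁ / Nat.gcd m₁ m₂) (m₂ / Nat.gcd m₁ m₂) ⊆ W ∧
    interior W ∩ wEUnion P (m₁ / Nat.gcd m₁ m₂) (m₂ / Nat.gcd m₁ m₂) = ∅

/-! ### Second derivatives, the Levi form and the Laplacian -/

section calculus
variable {E F G : Type*} [NormedAddCommGroup E] [NormedSpace ℝ E]
  [NormedAddCommGroup F] [NormedSpace ℝ F]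
  [NormedAddCommGroup G] [NormedSpace ℝ G]

/-- Second real Fréchet derivative `D²f(z)(v,w)`. -/
def D2 (f : E → G) (z v w : E) : G := fderiv ℝ (fderiv ℝ f) z v w

/-- Four times the Levi form of a real function in direction `v`, expressed through the real
second derivative: `D²f(v,v) + D²f(iv,iv)`. -/
def lev [NormedSpace ℂ E] (f : E → ℝ) (z v : E) : ℝ :=
  D2 f z v v + D2 f z (I • v) (I • v)

lemma hasFDerivAt_fderiv_apply {f : E → G} {z : E} (hf : ContDiffAt ℝ 2 f z) (w : E) :
    HasFDerivAt (fun x => fderiv ℝ f x w) ((fderiv ℝ (fderiv ℝ f) z).flip w) z := by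
  have h : DifferentiableAt ℝ (fderiv ℝ f) z :=
    (hf.fderiv_right (m := 1) (by norm_num)).differentiableAt (by norm_num)
  exact ((ContinuousLinearMap.apply ℝ G w).hasFDerivAt.comp z h.hasFDerivAt)

lemma eventually_fderiv_ofReal {f : E → ℝ} {z : E} (hf : ContDiffAt ℝ 2 f z) :
    ∀ᶠ x in nhds z, ∀ w, fderiv ℝ (fun y => (f y : ℂ)) x w = (fderiv ℝ f x w : ℂ) := by
  filter_upwards [hf.eventually (by simp)] with x hx w
  have h := (hx.differentiableAt (by norm_num)).hasFDerivAt
  have h2 := (Complex.ofRealCLM.hasFDerivAt (x := f x)).comp x h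
  have h3 : fderiv ℝ (fun y => (f y : ℂ)) x = Complex.ofRealCLM.comp (fderiv ℝ f x) := h2.fderiv
  rw [h3]; simp

lemma D2_symm {f : E → ℝ} {z : E} (hf : ContDiffAt ℝ 2 f z) (v w : E) :
    D2 f z v w = D2 f z w v :=
  (hf.isSymmSndFDerivAt (by simp)).eq v w

/-- Derivative of `(Df(e) + i Df(e₁)) / 2`, where `e₁` stands for the second vector; `wdbar` and
`wdbar1` are of this form. -/
lemma hasFDerivAt_wdbar_aux {f : E → ℝ} {z : E} (hf : ContDiffAt ℝ 2 f z) (e e' v : E) :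
    fderiv ℝ (fun x => (1 / 2 : ℂ) * (fderiv ℝ (fun y => (f y : ℂ)) x e +
      I * fderiv ℝ (fun y => (f y : ℂ)) x e')) z v =
      (1 / 2) * (((D2 f z v e : ℝ) : ℂ) + I * ((D2 f z v e' : ℝ) : ℂ)) := by
  have h1 := (Complex.ofRealCLM.hasFDerivAt).comp z (hasFDerivAt_fderiv_apply hf e)
  have h2 := (Complex.ofRealCLM.hasFDerivAt).comp z (hasFDerivAt_fderiv_apply hf e')
  have h3 := (h1.add (h2.const_mul I)).const_mul (1 / 2 : ℂ)
  have h4 := h3.congr_of_eventuallyEq (f₁ := fun x => (1 / 2 : ℂ) *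
      (fderiv ℝ (fun y => (f y : ℂ)) x e + I * fderiv ℝ (fun y => (f y : ℂ)) x e')) (by
    filter_upwards [eventually_fderiv_ofReal hf] with x hx
    simp [hx])
  rw [h4.fderiv]
  simp [D2]
  ring

/-- For a `C²` function on `ℂ`, `lev u z 1` is the Laplacian. -/
lemma lap_eq_lev {u : ℂ → ℝ} {z : ℂ} (hu : ContDiffAt ℝ 2 u z) :
    lap u z = ((lev u z 1 : ℝ) : ℂ) := by
  unfold lap wd1 wdbar1 lev
  rw [hasFDerivAt_wdbar_aux hu, hasFDerivAt_wdbar_aux hu, D2_symm hu I 1]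
  push_cast
  simp only [smul_eq_mul, mul_one]
  linear_combination (-((D2 u z I I : ℝ) : ℂ)) * I_mul_I

lemma mixedDeriv_eq {P : ℂ × ℂ → ℝ} {z : ℂ × ℂ} (hP : ContDiffAt ℝ 2 P z) (ej ek : ℂ × ℂ) :
    mixedDeriv P ej ek z = (1 / 4) * (((D2 P z ej ek : ℝ) : ℂ) + I * (D2 P z ej (I • ek) : ℝ)
      - I * (D2 P z (I • ej) ek : ℝ) + (D2 P z (I • ej) (I • ek) : ℝ)) := by
  unfold mixedDeriv wd wdbar
  rw [hasFDerivAt_wdbar_aux hP, hasFDerivAt_wdbar_aux hP]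
  linear_combination (-((D2 P z (I • ej) (I • ek) : ℝ) : ℂ) / 4) * I_mul_I

lemma D2_add_left (f : E → G) (z v v' w : E) : D2 f z (v + v') w = D2 f z v w + D2 f z v' w := by
  simp [D2]
lemma D2_add_right (f : E → G) (z v w w' : E) : D2 f z v (w + w') = D2 f z v w + D2 f z v w' := by
  simp [D2]
lemma D2_smul_left (f : E → G) (z : E) (c : ℝ) (v w : E) : D2 f z (c • v) w = c • D2 f z v w := by
  simp [D2]
lemma D2_smul_right (f : E → G) (z : E) (c : ℝ) (v w : E) : D2 f z v (c • w) = c • D2 f z v w := by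
  simp [D2]

lemma leviForm_re_eq {P : ℂ × ℂ → ℝ} {z : ℂ × ℂ} (hP : ContDiffAt ℝ 2 P z) (v : ℂ × ℂ) :
    4 * (leviForm P z v).re = lev P z v := by
  obtain ⟨⟨a, b⟩, ⟨c, d⟩⟩ := v
  have hv : ((⟨a, b⟩, ⟨c, d⟩) : ℂ × ℂ) = a • ((1, 0) : ℂ × ℂ) + b • (I • ((1, 0) : ℂ × ℂ))
      + c • ((0, 1) : ℂ × ℂ) + d • (I • ((0, 1) : ℂ × ℂ)) := by
    ext <;> simp [Complex.ext_iff]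
  have hIv : I • ((⟨a, b⟩, ⟨c, d⟩) : ℂ × ℂ) = a • (I • ((1, 0) : ℂ × ℂ)) + (-b) • ((1, 0) : ℂ × ℂ)
      + c • (I • ((0, 1) : ℂ × ℂ)) + (-d) • ((0, 1) : ℂ × ℂ) := by
    ext <;> simp [Complex.ext_iff]
  unfold leviForm lev
  rw [hIv, hv]
  simp only [mixedDeriv_eq hP]
  simp only [D2_add_left, D2_add_right, D2_smul_left, D2_smul_right, smul_eq_mul]
  rw [D2_symm hP (0,1) (1,0), D2_symm hP (I • (0,1)) (1,0), D2_symm hP (0,1) (I • (1,0)),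
    D2_symm hP (I • (0,1)) (I • (1,0)), D2_symm hP (I • (1,0)) (1,0),
    D2_symm hP (I • (0,1)) (0,1)]
  simp [Complex.mul_re, Complex.mul_im]
  ring

lemma lev_smul [NormedSpace ℂ E] [IsScalarTower ℝ ℂ E] (f : E → ℝ) (z : E) (c : ℂ) (v : E) :
    lev f z (c • v) = ‖c‖ ^ 2 * lev f z v := by
  have hr : ∀ (r : ℝ) (x : E), (r : ℂ) • x = r • x := fun r x => IsScalarTower.algebraMap_smul ℂ r x
  have h1 : c • v = c.re • v + c.im • (I • v) := by
    conv_lhs => rw [← re_add_im c]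
    rw [add_smul, mul_smul, hr, hr]
  have h2 : I • c • v = c.re • (I • v) + (-c.im) • v := by
    conv_lhs => rw [← re_add_im c]
    rw [smul_smul, mul_add, add_smul, mul_comm I, mul_smul, hr,
      show I * (c.im * I) = ((-c.im : ℝ) : ℂ) by
        push_cast; linear_combination (c.im : ℂ) * I_mul_I, hr]
  unfold lev
  rw [h2, h1]
  simp only [D2_add_left, D2_add_right, D2_smul_left, D2_smul_right, smul_eq_mul]
  rw [← Complex.normSq_eq_norm_sq, Complex.normSq_apply]
  ring

end calculus

section chain
variable {E F : Type*} [NormedAddCommGroup E] [NormedSpace ℝ E] [NormedSpace ℂ E]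
  [IsScalarTower ℝ ℂ E] [NormedAddCommGroup F] [NormedSpace ℝ F] [NormedSpace ℂ F]
  [IsScalarTower ℝ ℂ F]

/-- Holomorphic chain rule for the Levi form: the term involving the second derivative of `φ` drops
out because that derivative is complex bilinear. -/
lemma lev_comp {f : F → ℝ} {φ : E → F} {z : E} (hf : ContDiffAt ℝ 2 f (φ z))
    (hφ : ContDiffAt ℂ 2 φ z) (v : E) :
    lev (fun x => f (φ x)) z v = lev f (φ z) (fderiv ℂ φ z v) := by
  have hφc : ContinuousAt φ z := hφ.continuousAt
  have key : ∀ w v, D2 (fun x => f (φ x)) z v w =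
      D2 f (φ z) (fderiv ℂ φ z v) (fderiv ℂ φ z w)
        + fderiv ℝ f (φ z) (fderiv ℂ (fderiv ℂ φ) z v w) := by
    intro w v
    have hcomp : ContDiffAt ℝ 2 (fun x => f (φ x)) z := hf.comp z (hφ.restrict_scalars ℝ)
    have h1 := hasFDerivAt_fderiv_apply hcomp w
    have e1 : (fun x => fderiv ℝ (fun x => f (φ x)) x w) =ᶠ[nhds z]
        fun x => fderiv ℝ f (φ x) (fderiv ℂ φ x w) := by
      filter_upwards [hφc.eventually (hf.eventually (by simp)), hφ.eventually (by simp)]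
        with x hx hx'
      have a1 := (hx.differentiableAt (by norm_num)).hasFDerivAt
      have a2 := (hx'.differentiableAt (by norm_num)).hasFDerivAt.restrictScalars ℝ
      have := (a1.comp x a2).fderiv
      have h' : fderiv ℝ (fun x => f (φ x)) x = _ := this
      rw [h']; rfl
    have b1 : HasFDerivAt (fderiv ℝ f) (fderiv ℝ (fderiv ℝ f) (φ z)) (φ z) :=
      ((hf.fderiv_right (m := 1) (by norm_num)).differentiableAt (by norm_num)).hasFDerivAt
    have b2 := (hφ.differentiableAt (by norm_num)).hasFDerivAt.restrictScalars ℝ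
    have b3 : HasFDerivAt (fderiv ℂ φ) (fderiv ℂ (fderiv ℂ φ) z) z :=
      ((hφ.fderiv_right (m := 1) (by norm_num)).differentiableAt (by norm_num)).hasFDerivAt
    have b4 := (((ContinuousLinearMap.apply ℂ F w).hasFDerivAt).comp z b3).restrictScalars ℝ
    have b5 := (b1.comp z b2).clm_apply b4
    have h2 := b5.congr_of_eventuallyEq e1
    have := congrArg (fun L => L v) (h1.unique h2)
    simp at this
    simp only [D2]
    rw [this, add_comm]
  unfold lev
  rw [key, key]
  have : fderiv ℂ (fderiv ℂ φ) z (I • v) (I • v) = - fderiv ℂ (fderiv ℂ φ) z v v := by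
    simp [smul_smul]
  rw [this]
  simp only [map_neg, map_smul]
  ring
end chain

/-! ### Entire functions of two variables -/

lemma hasDerivAt_line {H : ℂ × ℂ → ℂ} (hH : Differentiable ℂ H) (z v : ℂ × ℂ) (t : ℂ) :
    HasDerivAt (fun t : ℂ => H (z + t • v)) (fderiv ℂ H (z + t • v) v) t := by
  have h1 : HasDerivAt (fun t : ℂ => z + t • v) v t := by
    simpa using ((hasDerivAt_id t).smul_const v).const_add z
  exact (hH _).hasFDerivAt.comp_hasDerivAt t h1

/-- Cauchy estimate for the full derivative. -/
lemma norm_fderiv_le_of_bound {H : ℂ × ℂ → ℂ} (hH : Differentiable ℂ H) {x : ℂ × ℂ} {M : ℝ}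
    (hM : ∀ y ∈ closedBall x 1, ‖H y‖ ≤ M) : ‖fderiv ℂ H x‖ ≤ M := by
  have hM0 : 0 ≤ M := (norm_nonneg _).trans (hM x (by simp))
  refine ContinuousLinearMap.opNorm_le_bound _ hM0 fun w => ?_
  by_cases hw : w = 0
  · simp [hw]
  have hwn : 0 < ‖w‖ := norm_pos_iff.2 hw
  have hd : Differentiable ℂ (fun t : ℂ => H (x + t • w)) :=
    fun t => (hasDerivAt_line hH x w t).differentiableAt
  have := Complex.norm_deriv_le_of_forall_mem_sphere_norm_le (c := 0) (R := 1 / ‖w‖) (C := M)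
    (by positivity) hd.diffContOnCl (f := fun t : ℂ => H (x + t • w)) (by
      intro t ht
      apply hM
      simp only [mem_sphere_iff_norm, sub_zero] at ht
      simp [mem_closedBall_iff_norm, norm_smul, ht, hwn.ne'])
  rw [(hasDerivAt_line hH x w 0).deriv] at this
  simpa using this

/-- Partial derivatives of an entire function are entire, by differentiating Cauchy's formula
under the integral sign. -/
lemma differentiable_fderiv_apply {H : ℂ × ℂ → ℂ} (hH : Differentiable ℂ H) (v : ℂ × ℂ) :
    Differentiable ℂ (fun z => fderiv ℂ H z v) := by
  set γ : ℝ → ℂ := circleMap 0 1 with hγ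
  set g : ℝ → ℂ := fun θ => deriv γ θ * (1 / (γ θ) ^ 2) with hg
  have hγc : Continuous γ := continuous_circleMap 0 1
  have hγn : ∀ θ, ‖γ θ‖ = 1 := fun θ => by simp [hγ]
  have hγ0 : ∀ θ, γ θ ≠ 0 := fun θ h => by simpa [h] using hγn θ
  have hgc : Continuous g := by
    have : Continuous (deriv γ) := by
      have : deriv γ = fun θ => γ θ * I := by ext θ; simp [hγ, deriv_circleMap]
      rw [this]; fun_prop
    exact this.mul (continuous_const.div (hγc.pow 2) fun θ => pow_ne_zero _ (hγ0 θ))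
  have hgn : ∀ θ, ‖g θ‖ = 1 := fun θ => by
    simp [hg, hγ, deriv_circleMap]
  have hHc := hH.continuous
  have cauchy : ∀ z, (2 * Real.pi * I) * fderiv ℂ H z v =
      ∫ θ in (0 : ℝ)..2 * Real.pi, g θ * H (z + γ θ • v) := by
    intro z
    have hd : Differentiable ℂ (fun t : ℂ => H (z + t • v)) :=
      fun t => (hasDerivAt_line hH z v t).differentiableAt
    have := DifferentiableOn.deriv_eq_smul_circleIntegral (c := 0) (R := 1) one_pos
      hd.differentiableOn (f := fun t : ℂ => H (z + t • v))
    rw [(hasDerivAt_line hH z v 0).deriv] at this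
    simp only [zero_smul, add_zero, smul_eq_mul, sub_zero] at this
    rw [← this, circleIntegral]
    refine intervalIntegral.integral_congr fun θ _ => ?_
    simp [hg, hγ, mul_assoc]
  intro z0
  obtain ⟨M, hM⟩ := (isCompact_closedBall (0 : ℂ × ℂ) (‖z0‖ + 2 + ‖v‖)).exists_bound_of_continuousOn
    hHc.continuousOn
  have hbd : ∀ x ∈ ball z0 1, ∀ θ, ‖fderiv ℂ H (x + γ θ • v)‖ ≤ M := by
    intro x hx θ
    refine norm_fderiv_le_of_bound hH fun y hy => hM y ?_
    rw [mem_closedBall_iff_norm] at hy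
    rw [mem_ball_iff_norm] at hx
    have e : y = (y - (x + γ θ • v)) + (x - z0) + z0 + γ θ • v := by abel
    have : ‖γ θ • v‖ = ‖v‖ := by rw [norm_smul, hγn, one_mul]
    rw [mem_closedBall_iff_norm, sub_zero, e]
    refine (norm_add_le _ _).trans ?_
    have h3 := norm_add₃_le (a := y - (x + γ θ • v)) (b := x - z0) (c := z0)
    linarith
  have key := intervalIntegral.hasFDerivAt_integral_of_dominated_of_fderiv_le (𝕜 := ℂ)
    (μ := MeasureTheory.volume) (a := 0) (b := 2 * Real.pi) (x₀ := z0) (s := ball z0 1)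
    (F := fun z θ => g θ * H (z + γ θ • v))
    (F' := fun z θ => g θ • fderiv ℂ H (z + γ θ • v)) (bound := fun _ => M)
    (ball_mem_nhds _ one_pos)
    (Filter.Eventually.of_forall fun z => (by
      have : Continuous (fun θ => g θ * H (z + γ θ • v)) := by fun_prop
      exact this.aestronglyMeasurable))
    (by
      have : Continuous (fun θ => g θ * H (z0 + γ θ • v)) := by fun_prop
      exact this.intervalIntegrable _ _)
    (by
      have h1 : Measurable (fun θ => fderiv ℂ H (z0 + γ θ • v)) :=
        (measurable_fderiv ℂ H).comp (by fun_prop : Continuous fun θ => z0 + γ θ • v).measurable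
      exact (hgc.measurable.smul h1).aestronglyMeasurable)
    (Filter.Eventually.of_forall fun θ _ x hx => by
      rw [norm_smul, hgn, one_mul]; exact hbd x hx θ)
    (by simp)
    (Filter.Eventually.of_forall fun θ _ x hx => by
      have : HasFDerivAt (fun z => H (z + γ θ • v)) (fderiv ℂ H (x + γ θ • v)) x := by
        have h := (hH (x + γ θ • v)).hasFDerivAt
        exact h.comp x ((hasFDerivAt_id x).add_const _)
      simpa using this.const_mul (g θ))
  have h2 : (fun z => fderiv ℂ H z v) = fun z => (2 * Real.pi * I)⁻¹ *
      ∫ θ in (0 : ℝ)..2 * Real.pi, g θ * H (z + γ θ • v) := by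
    ext z
    rw [← cauchy z, inv_mul_cancel_left₀]
    exact two_pi_I_ne_zero
  rw [h2]
  exact key.differentiableAt.const_mul _

lemma fderiv_eq_partials (H : ℂ × ℂ → ℂ) (z : ℂ × ℂ) :
    fderiv ℂ H z = (fderiv ℂ H z (1, 0)) • ContinuousLinearMap.fst ℂ ℂ ℂ
      + (fderiv ℂ H z (0, 1)) • ContinuousLinearMap.snd ℂ ℂ ℂ := by
  ext <;> simp

lemma contDiff_one_of_differentiable {H : ℂ × ℂ → ℂ} (hH : Differentiable ℂ H) :
    ContDiff ℂ 1 H := by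
  rw [contDiff_one_iff_fderiv]
  refine ⟨hH, ?_⟩
  have : fderiv ℂ H = fun z => (fderiv ℂ H z (1, 0)) • ContinuousLinearMap.fst ℂ ℂ ℂ
      + (fderiv ℂ H z (0, 1)) • ContinuousLinearMap.snd ℂ ℂ ℂ := by
    ext1 z; exact fderiv_eq_partials H z
  rw [this]
  have h1 := (differentiable_fderiv_apply hH (1, 0)).continuous
  have h2 := (differentiable_fderiv_apply hH (0, 1)).continuous
  fun_prop

/-! ### Levi-null directions from Property (B) -/

/-- Harmonicity of `P ∘ φ` at the centre of a holomorphic disc makes the velocity of the disc a null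
direction of the Levi form. -/
lemma lev_deriv_eq_zero {P : ℂ × ℂ → ℝ} (hP : ContDiff ℝ 2 P) {φ : ℂ → ℂ × ℂ}
    (hφ : DifferentiableOn ℂ φ (ball 0 1)) (h0 : lap (fun w => P (φ w)) 0 = 0) :
    lev P (φ 0) (deriv φ 0) = 0 := by
  have ha : ContDiffAt ℂ 2 φ 0 :=
    ((hφ.analyticAt (ball_mem_nhds _ one_pos)).contDiffAt)
  have hc : ContDiffAt ℝ 2 (fun w => P (φ w)) 0 :=
    hP.contDiffAt.comp 0 (ha.restrict_scalars ℝ)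
  rw [lap_eq_lev hc, lev_comp hP.contDiffAt ha] at h0
  rw [← fderiv_apply_one_eq_deriv]
  exact_mod_cast h0

/-- At a regular point of `H`, the level curve through it is parametrised by a disc whose
velocity is annihilated by `dH`; hence the tangent direction is Levi-null. -/
lemma lev_tangent_of_ne {P : ℂ × ℂ → ℝ} (hP : ContDiff ℝ 2 P) {H : ℂ × ℂ → ℂ}
    (hH : Differentiable ℂ H) (hB : ∀ c : ℂ, HarmonicAlong P (H ⁻¹' {c})) (z : ℂ × ℂ)
    (hz : fderiv ℂ H z ≠ 0) :
    lev P z (-(fderiv ℂ H z (0, 1)), fderiv ℂ H z (1, 0)) = 0 := by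
  set a := fderiv ℂ H z (1, 0) with ha
  set b := fderiv ℂ H z (0, 1) with hb
  have hdH : fderiv ℂ H z = a • ContinuousLinearMap.fst ℂ ℂ ℂ
      + b • ContinuousLinearMap.snd ℂ ℂ ℂ := fderiv_eq_partials H z
  set N : ℂ := a * conj a + b * conj b with hN
  have hN0 : N ≠ 0 := by
    intro h
    have h' : ((‖a‖ ^ 2 + ‖b‖ ^ 2 : ℝ) : ℂ) = 0 := by
      rw [← h, hN, mul_conj', mul_conj']; push_cast; ring
    have h'' : ‖a‖ ^ 2 + ‖b‖ ^ 2 = 0 := by exact_mod_cast h'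
    have h1 : a = 0 := by
      have : ‖a‖ ^ 2 = 0 := by nlinarith [sq_nonneg ‖a‖, sq_nonneg ‖b‖]
      simpa using this
    have h2 : b = 0 := by
      have : ‖b‖ ^ 2 = 0 := by nlinarith [sq_nonneg ‖a‖, sq_nonneg ‖b‖]
      simpa using this
    exact hz (hdH.trans (by rw [h1, h2]; ext <;> simp))
  set lam : ℂ × ℂ →L[ℂ] ℂ := (-conj b) • ContinuousLinearMap.fst ℂ ℂ ℂ
      + (conj a) • ContinuousLinearMap.snd ℂ ℂ ℂ with hlam
  -- `H` and a linear form independent of `dH` at `z` are local coordinates near `z`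
  set Φ : ℂ × ℂ → ℂ × ℂ := fun x => (H x, lam x) with hΦ
  have hΦc : ContDiffAt ℂ 1 Φ z :=
    (contDiff_one_of_differentiable hH).contDiffAt.prodMk lam.contDiff.contDiffAt
  let e : (ℂ × ℂ) ≃L[ℂ] (ℂ × ℂ) := ContinuousLinearEquiv.equivOfInverse
    ((fderiv ℂ H z).prod lam)
    (((conj a / N) • ContinuousLinearMap.fst ℂ ℂ ℂ - (b / N) • ContinuousLinearMap.snd ℂ ℂ ℂ).prod
     ((conj b / N) • ContinuousLinearMap.fst ℂ ℂ ℂ + (a / N) • ContinuousLinearMap.snd ℂ ℂ ℂ))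
    (by
      intro x
      rw [hdH]
      ext
      · simp [hlam]; field_simp; rw [hN]; ring
      · simp [hlam]; field_simp; rw [hN]; ring)
    (by
      intro x
      rw [hdH]
      ext
      · simp [hlam]; field_simp; rw [hN]; ring
      · simp [hlam]; field_simp; rw [hN]; ring)
  have hΦ' : HasFDerivAt Φ (e : ℂ × ℂ →L[ℂ] ℂ × ℂ) z :=
    (hH z).hasFDerivAt.prodMk lam.hasFDerivAt
  set Ψ := hΦc.localInverse hΦ' one_ne_zero with hΨ
  have hΨz : Ψ (Φ z) = z := hΦc.localInverse_apply_image hΦ' one_ne_zero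
  have hΨc : ContDiffAt ℂ 1 Ψ (Φ z) := hΦc.to_localInverse hΦ' one_ne_zero
  have hr : ∀ᶠ y in nhds (Φ z), Φ (Ψ y) = y :=
    (hΦc.hasStrictFDerivAt' hΦ' one_ne_zero).eventually_right_inverse
  have hd : ∀ᶠ y in nhds (Φ z), DifferentiableAt ℂ Ψ y := by
    filter_upwards [hΨc.eventually (by simp)] with y hy
    exact hy.differentiableAt one_ne_zero
  obtain ⟨ε, hε, hball⟩ := Metric.eventually_nhds_iff_ball.1 (hr.and hd)
  set η : ℂ → ℂ × ℂ := fun ζ => (H z, lam z + (ε : ℂ) * ζ) with hη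
  have hη_mem : ∀ ζ ∈ ball (0 : ℂ) 1, η ζ ∈ ball (Φ z) ε := by
    intro ζ hζ
    rw [mem_ball_iff_norm, sub_zero] at hζ
    rw [mem_ball_iff_norm]
    have : η ζ - Φ z = (0, (ε : ℂ) * ζ) := by simp [hη, hΦ]
    rw [this, Prod.norm_def]
    simp [abs_of_pos hε, hε]
    exact hζ
  have hε0 : (ε : ℂ) ≠ 0 := by exact_mod_cast hε.ne'
  have hφd : DifferentiableOn ℂ (fun ζ => Ψ (η ζ)) (ball 0 1) := by
    intro ζ hζ
    have h1 : DifferentiableAt ℂ η ζ := by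
      simp only [hη]; fun_prop
    exact ((hball _ (hη_mem ζ hζ)).2.comp ζ h1).differentiableWithinAt
  have hφr : ∀ ζ ∈ ball (0 : ℂ) 1, Φ (Ψ (η ζ)) = η ζ := fun ζ hζ => (hball _ (hη_mem ζ hζ)).1
  have h0 := hB (H z) (fun ζ => Ψ (η ζ)) hφd
    (by
      intro x hx y hy hxy
      have h1 : η x = η y := by rw [← hφr x hx, ← hφr y hy]; exact congrArg Φ hxy
      simpa [hη, hε0] using h1)
    (by
      rintro _ ⟨ζ, hζ, rfl⟩
      exact congrArg Prod.fst (hφr ζ hζ))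
    0 (by simp)
  have hη0 : η 0 = Φ z := by simp [hη, hΦ]
  have h1 := lev_deriv_eq_zero hP hφd h0
  have hφ0 : (fun ζ => Ψ (η ζ)) 0 = z := by simp only [hη0, hΨz]
  have h1 : lev P z (deriv (fun ζ => Ψ (η ζ)) 0) = 0 := by rwa [hη0, hΨz] at h1
  have hφ' : HasDerivAt (fun ζ => Ψ (η ζ)) (deriv (fun ζ => Ψ (η ζ)) 0) 0 :=
    (hφd.differentiableAt (ball_mem_nhds _ one_pos)).hasDerivAt
  set v := deriv (fun ζ => Ψ (η ζ)) 0 with hv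
  have h2 : HasDerivAt (fun ζ => Φ (Ψ (η ζ))) (e v) 0 := by
    have : HasFDerivAt Φ (e : ℂ × ℂ →L[ℂ] ℂ × ℂ) ((fun ζ => Ψ (η ζ)) 0) := by rw [hφ0]; exact hΦ'
    exact this.comp_hasDerivAt 0 hφ'
  have h3 : HasDerivAt η ((0, (ε : ℂ)) : ℂ × ℂ) 0 := by
    have h4 : HasDerivAt (fun ζ : ℂ => lam z + (ε : ℂ) * ζ) (ε : ℂ) 0 := by
      simpa using ((hasDerivAt_id (0 : ℂ)).const_mul (ε : ℂ)).const_add (lam z)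
    exact (hasDerivAt_const _ _).prodMk h4
  have h5 : e v = (0, (ε : ℂ)) := by
    refine h2.unique (h3.congr_of_eventuallyEq ?_)
    filter_upwards [ball_mem_nhds (0 : ℂ) one_pos] with ζ hζ using hφr ζ hζ
  have h6 : v = e.symm (0, (ε : ℂ)) := by rw [← h5]; simp
  have h7 : v = ((ε : ℂ) / N) • ((-b, a) : ℂ × ℂ) := by
    rw [h6]
    change (((conj a / N) • ContinuousLinearMap.fst ℂ ℂ ℂ - (b / N) • ContinuousLinearMap.snd ℂ ℂ ℂ).prod
     ((conj b / N) • ContinuousLinearMap.fst ℂ ℂ ℂ + (a / N) • ContinuousLinearMap.snd ℂ ℂ ℂ)) _ = _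
    ext <;> simp <;> ring
  rw [h7, lev_smul] at h1
  rcases mul_eq_zero.1 h1 with h | h
  · exfalso
    have : (ε : ℂ) / N = 0 := by simpa using h
    exact div_ne_zero hε0 hN0 this
  · exact h

lemma lev_zero_dir {P : ℂ × ℂ → ℝ} (z : ℂ × ℂ) : lev P z 0 = 0 := by simp [lev, D2]

lemma lev_tangent {P : ℂ × ℂ → ℝ} (hP : ContDiff ℝ 2 P) {H : ℂ × ℂ → ℂ}
    (hH : Differentiable ℂ H) (hB : ∀ c : ℂ, HarmonicAlong P (H ⁻¹' {c})) (z : ℂ × ℂ) :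
    lev P z (-(fderiv ℂ H z (0, 1)), fderiv ℂ H z (1, 0)) = 0 := by
  by_cases h : fderiv ℂ H z = 0
  · simp only [h, zero_apply, neg_zero]
    exact lev_zero_dir z
  · exact lev_tangent_of_ne hP hH hB z h

/-- If `H` is constant, every affine disc lies in a level set, and the whole Levi form vanishes. -/
lemma lev_of_fderiv_zero {P : ℂ × ℂ → ℝ} (hP : ContDiff ℝ 2 P) {H : ℂ × ℂ → ℂ}
    (hH : Differentiable ℂ H) (hB : ∀ c : ℂ, HarmonicAlong P (H ⁻¹' {c}))
    (h0 : ∀ z, fderiv ℂ H z = 0) (z v : ℂ × ℂ) : lev P z v = 0 := by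
  by_cases hv : v = 0
  · rw [hv]; exact lev_zero_dir z
  have hconst : ∀ x, H x = H z := fun x => is_const_of_fderiv_eq_zero hH h0 x z
  have hd : ∀ ζ, HasDerivAt (fun ζ : ℂ => z + ζ • v) v ζ := fun ζ => by
    simpa using ((hasDerivAt_id ζ).smul_const v).const_add z
  have h1 := hB (H z) (fun ζ => z + ζ • v)
    (fun ζ _ => (hd ζ).differentiableAt.differentiableWithinAt)
    (by
      intro x _ y _ hxy
      simpa [hv] using hxy)
    (by rintro _ ⟨ζ, _, rfl⟩; exact hconst _)
    0 (by simp)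
  have h2 := lev_deriv_eq_zero hP (φ := fun ζ => z + ζ • v)
    (fun ζ _ => (hd ζ).differentiableAt.differentiableWithinAt) h1
  rw [(hd 0).deriv] at h2
  simpa using h2

/-! ### Identity theorems -/

lemma entire_zero_of_real {f : ℂ → ℂ} (hf : Differentiable ℂ f) (h : ∀ x : ℝ, f x = 0) (z : ℂ) :
    f z = 0 := by
  have ha : AnalyticOnNhd ℂ f univ := fun z _ => hf.analyticAt z
  refine ha.eqOn_zero_of_preconnected_of_frequently_eq_zero isPreconnected_univ (z₀ := 0)
    (mem_univ _) ?_ (mem_univ z)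
  have ht : Filter.Tendsto (fun n : ℕ => (((1 / ((n : ℝ) + 1) : ℝ)) : ℂ)) Filter.atTop
      (nhdsWithin 0 {0}ᶜ) := by
    refine tendsto_nhdsWithin_iff.2 ⟨?_, Filter.Eventually.of_forall fun n => ?_⟩
    · have := (Complex.continuous_ofReal.tendsto 0).comp
        (tendsto_one_div_add_atTop_nhds_zero_nat (𝕜 := ℝ))
      rw [Complex.ofReal_zero] at this
      exact this
    · have : (1 / ((n : ℝ) + 1)) ≠ 0 := by positivity
      exact Complex.ofReal_ne_zero.2 this
  exact ht.frequently (Filter.Frequently.of_forall fun n => h _)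

/-- Polarisation in one variable: `{w = z̄}` is a set of uniqueness. -/
lemma polar_one {g : ℂ → ℂ → ℂ} (hg : Differentiable ℂ (fun p : ℂ × ℂ => g p.1 p.2))
    (h : ∀ z, g z (conj z) = 0) (z w : ℂ) : g z w = 0 := by
  have key : ∀ x y : ℂ, g (x + I * y) (x - I * y) = 0 := by
    intro x y
    refine entire_zero_of_real (f := fun y => g (x + I * y) (x - I * y)) ?_ ?_ y
    · exact hg.comp (f := fun y : ℂ => (x + I * y, x - I * y)) (by fun_prop)
    intro y
    refine entire_zero_of_real (f := fun x => g (x + I * y) (x - I * y)) ?_ ?_ x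
    · exact hg.comp (f := fun x : ℂ => (x + I * y, x - I * y)) (by fun_prop)
    intro x
    have := h (x + I * y)
    simpa [sub_eq_add_neg] using this
  have := key ((z + w) / 2) ((z - w) / (2 * I))
  have h2 : I * ((z - w) / (2 * I)) = (z - w) / 2 := by field_simp
  rw [h2] at this
  convert this using 1
  congr 1 <;> ring

/-- Coordinatewise complex conjugation on `ℂ²`. -/
def cj (z : ℂ × ℂ) : ℂ × ℂ := (conj z.1, conj z.2)

/-- Polarisation in two variables: `{w = z̄}` is a set of uniqueness for entire functions of
`(z, w)`. -/
lemma polar_two {G : ℂ × ℂ → ℂ × ℂ → ℂ}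
    (hG : Differentiable ℂ (fun p : (ℂ × ℂ) × (ℂ × ℂ) => G p.1 p.2))
    (h : ∀ z, G z (cj z) = 0) (z w : ℂ × ℂ) : G z w = 0 := by
  have h1 : ∀ c a b, G (a, c) (b, conj c) = 0 := by
    intro c a b
    refine polar_one (g := fun a b => G (a, c) (b, conj c)) ?_ ?_ a b
    · exact hG.comp (f := fun p : ℂ × ℂ => ((p.1, c), (p.2, conj c))) (by fun_prop)
    · intro a; exact h (a, c)
  refine polar_one (g := fun c d => G (z.1, c) (w.1, d)) ?_ ?_ z.2 w.2
  · exact hG.comp (f := fun p : ℂ × ℂ => ((z.1, p.1), (w.1, p.2))) (by fun_prop)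
  · intro c; exact h1 c _ _

/-- The ring of entire functions on `ℂ²` has no zero divisors. -/
lemma entire_mul_eq_zero {f g : ℂ × ℂ → ℂ} (hf : Differentiable ℂ f) (hg : Differentiable ℂ g)
    (h : ∀ z, f z * g z = 0) {z0 : ℂ × ℂ} (h0 : f z0 ≠ 0) (z : ℂ × ℂ) : g z = 0 := by
  have hev : ∀ᶠ x in nhds z0, g x = 0 := by
    filter_upwards [hf.continuous.continuousAt.eventually_ne h0] with x hx
    exact (mul_eq_zero.1 (h x)).resolve_left hx
  have hd : Differentiable ℂ (fun t : ℂ => g (z0 + t • (z - z0))) :=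
    fun t => (hasDerivAt_line hg z0 (z - z0) t).differentiableAt
  have ha : AnalyticOnNhd ℂ (fun t : ℂ => g (z0 + t • (z - z0))) univ := fun t _ => hd.analyticAt t
  have hc : Filter.Tendsto (fun t : ℂ => z0 + t • (z - z0)) (nhds 0) (nhds z0) := by
    have : Continuous (fun t : ℂ => z0 + t • (z - z0)) := by fun_prop
    simpa using this.tendsto 0
  have := ha.eqOn_zero_of_preconnected_of_eventuallyEq_zero isPreconnected_univ (z₀ := 0)
    (mem_univ _) (hc.eventually hev) (mem_univ 1)
  simpa using this

/-! ### Polynomials in `z₁, z̄₁, z₂, z̄₂` and their polarisation -/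

/-- The polarisation of a polynomial in `z₁, z̄₁, z₂, z̄₂`: the conjugated variables are replaced
by independent ones. -/
def ev (R : MvPolynomial (Fin 4) ℂ) (z w : ℂ × ℂ) : ℂ :=
  MvPolynomial.eval ![z.1, w.1, z.2, w.2] R

lemma hasFDerivAt_eval {𝕜 E : Type*} [NontriviallyNormedField 𝕜] [NormedAlgebra 𝕜 ℂ]
    [NormedAddCommGroup E] [NormedSpace 𝕜 E] {σ : Type*} [Fintype σ]
    (R : MvPolynomial σ ℂ) {x : E → σ → ℂ} {x' : σ → E →L[𝕜] ℂ} {y : E}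
    (hx : ∀ i, HasFDerivAt (fun y => x y i) (x' i) y) :
    ∃ L : E →L[𝕜] ℂ, HasFDerivAt (fun y => MvPolynomial.eval (x y) R) L y ∧
      ∀ v, L v = ∑ i, MvPolynomial.eval (x y) (MvPolynomial.pderiv i R) * x' i v := by
  classical
  induction R using MvPolynomial.induction_on with
  | C a => exact ⟨0, by simpa using hasFDerivAt_const a y, by simp⟩
  | add p q hp hq =>
    obtain ⟨L, hL, hL'⟩ := hp
    obtain ⟨M, hM, hM'⟩ := hq
    refine ⟨L + M, ?_, fun v => ?_⟩
    · simp only [map_add]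
      exact hL.add hM
    · simp [hL', hM', add_mul, Finset.sum_add_distrib]
  | mul_X p j hp =>
    obtain ⟨L, hL, hL'⟩ := hp
    have h := hL.mul (hx j)
    simp only [map_mul, MvPolynomial.eval_X]
    refine ⟨_, h, fun v => ?_⟩
    simp only [Derivation.leibniz, MvPolynomial.pderiv_X, smul_eq_mul, map_add, map_mul,
      MvPolynomial.eval_X, add_mul, Finset.sum_add_distrib]
    simp only [add_apply, smul_apply, smul_eq_mul, hL', Finset.mul_sum, mul_assoc]
    congr 1
    rw [Finset.sum_eq_single j]
    · simp
    · intro b _ hb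
      simp [Pi.single_eq_of_ne' hb]
    · simp

lemma ev_differentiable (R : MvPolynomial (Fin 4) ℂ) :
    Differentiable ℂ (fun p : (ℂ × ℂ) × (ℂ × ℂ) => ev R p.1 p.2) := by
  intro p
  obtain ⟨L, hL, -⟩ := hasFDerivAt_eval (𝕜 := ℂ) (y := p) R (x := fun p : (ℂ × ℂ) × (ℂ × ℂ) =>
    ![p.1.1, p.2.1, p.1.2, p.2.2])
    (x' := fun i => fderiv ℂ (fun p : (ℂ × ℂ) × (ℂ × ℂ) =>
      (![p.1.1, p.2.1, p.1.2, p.2.2] : Fin 4 → ℂ) i) p) (by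
    intro i
    refine DifferentiableAt.hasFDerivAt ?_
    fin_cases i <;> simp)
  exact hL.differentiableAt

open ContinuousLinearMap in
/-- Real derivative of `z ↦ R(z, z̄)`. -/
lemma hasFDerivAt_ev_cj (R : MvPolynomial (Fin 4) ℂ) (z : ℂ × ℂ) :
    ∃ L : ℂ × ℂ →L[ℝ] ℂ, HasFDerivAt (fun z => ev R z (cj z)) L z ∧
      ∀ v, L v = ev (MvPolynomial.pderiv 0 R) z (cj z) * v.1
        + ev (MvPolynomial.pderiv 1 R) z (cj z) * conj v.1
        + ev (MvPolynomial.pderiv 2 R) z (cj z) * v.2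
        + ev (MvPolynomial.pderiv 3 R) z (cj z) * conj v.2 := by
  obtain ⟨L, h, hL⟩ := hasFDerivAt_eval (𝕜 := ℝ) R (x := fun z : ℂ × ℂ =>
      ![z.1, (cj z).1, z.2, (cj z).2]) (y := z)
    (x' := ![fst ℝ ℂ ℂ, conjCLE.toContinuousLinearMap.comp (fst ℝ ℂ ℂ),
      snd ℝ ℂ ℂ, conjCLE.toContinuousLinearMap.comp (snd ℝ ℂ ℂ)]) (by
      intro i
      fin_cases i
      · exact (fst ℝ ℂ ℂ).hasFDerivAt
      · exact (conjCLE.toContinuousLinearMap.comp (fst ℝ ℂ ℂ)).hasFDerivAt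
      · exact (snd ℝ ℂ ℂ).hasFDerivAt
      · exact (conjCLE.toContinuousLinearMap.comp (snd ℝ ℂ ℂ)).hasFDerivAt)
  refine ⟨_, h, fun v => ?_⟩
  rw [hL]
  simp [Fin.sum_univ_four, ev]

lemma contDiff_ev_cj (R : MvPolynomial (Fin 4) ℂ) {n : WithTop ℕ∞} :
    ContDiff ℝ n (fun z => ev R z (cj z)) := by
  unfold ev cj
  induction R using MvPolynomial.induction_on with
  | C a => simpa using contDiff_const
  | add p q hp hq => simp only [map_add]; exact hp.add hq
  | mul_X p j hp =>
    simp only [map_mul, MvPolynomial.eval_X]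
    refine hp.mul ?_
    fin_cases j
    · exact contDiff_fst
    · exact conjCLE.contDiff.comp contDiff_fst
    · exact contDiff_snd
    · exact conjCLE.contDiff.comp contDiff_snd

/-! ### The complex Hessian of a polynomial and its kernel -/

section

open MvPolynomial (pderiv C)

lemma contDiff_of_ev {P : ℂ × ℂ → ℝ} {Q : MvPolynomial (Fin 4) ℂ}
    (hQ : ∀ z, (P z : ℂ) = ev Q z (cj z)) {n : WithTop ℕ∞} : ContDiff ℝ n P := by
  have : P = fun z => (ev Q z (cj z)).re := by ext z; rw [← hQ z]; simp
  rw [this]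
  exact Complex.reCLM.contDiff.comp (contDiff_ev_cj Q)

/-- The second derivative of `P` in terms of the representing polynomial; `R` represents the
derivative of `P` in the direction `w`. -/
lemma D2_of_ev {P : ℂ × ℂ → ℝ} {Q : MvPolynomial (Fin 4) ℂ}
    (hQ : ∀ z, (P z : ℂ) = ev Q z (cj z)) (z v w : ℂ × ℂ) :
    ∃ R : MvPolynomial (Fin 4) ℂ, R = C w.1 * pderiv 0 Q + C (conj w.1) * pderiv 1 Q
        + C w.2 * pderiv 2 Q + C (conj w.2) * pderiv 3 Q ∧
    ((D2 P z v w : ℝ) : ℂ) = ev (pderiv 0 R) z (cj z) * v.1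
        + ev (pderiv 1 R) z (cj z) * conj v.1
        + ev (pderiv 2 R) z (cj z) * v.2
        + ev (pderiv 3 R) z (cj z) * conj v.2 := by
  refine ⟨_, rfl, ?_⟩
  set R : MvPolynomial (Fin 4) ℂ := C w.1 * pderiv 0 Q + C (conj w.1) * pderiv 1 Q
        + C w.2 * pderiv 2 Q + C (conj w.2) * pderiv 3 Q with hR
  have hP : ContDiff ℝ 2 P := contDiff_of_ev hQ
  have h1 : ∀ x, ((fderiv ℝ P x w : ℝ) : ℂ) = ev R x (cj x) := by
    intro x
    have h := (eventually_fderiv_ofReal (hP.contDiffAt (x := x))).self_of_nhds w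
    rw [← h]
    obtain ⟨L, hL, hL'⟩ := hasFDerivAt_ev_cj Q x
    have e : (fun y => (P y : ℂ)) = fun z => ev Q z (cj z) := funext hQ
    rw [e, hL.fderiv, hL']
    simp [hR, ev]
    ring
  have h2 := (Complex.ofRealCLM.hasFDerivAt).comp z
    (hasFDerivAt_fderiv_apply (hP.contDiffAt (x := z)) w)
  obtain ⟨L, hL, hL'⟩ := hasFDerivAt_ev_cj R z
  have e : (Complex.ofRealCLM ∘ fun x => fderiv ℝ P x w) = fun z => ev R z (cj z) :=
    funext h1
  rw [e] at h2
  have h3 := congrArg (fun L => L v) (h2.unique hL)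
  rw [← hL', ← h3]
  simp [D2]

lemma pderiv_swap {σ : Type*} (i j : σ) (Q : MvPolynomial σ ℂ) :
    pderiv i (pderiv j Q) = pderiv j (pderiv i Q) := by
  classical
  induction Q using MvPolynomial.induction_on with
  | C a => simp
  | add p q hp hq => simp [hp, hq]
  | mul_X p k hp =>
    simp only [Derivation.leibniz, map_add, smul_eq_mul, hp, MvPolynomial.pderiv_X]
    have : ∀ a b : σ, pderiv a ((Pi.single b 1 : σ → MvPolynomial σ ℂ) k) = 0 := by
      intro a b
      by_cases h : k = b
      · subst h; simp
      · rw [Pi.single_eq_of_ne h]; simp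
    rw [this, this]
    ring

/-- The sesquilinear form `Σ ∂²Q/∂z_j∂z̄_k v_j w̄_k`. -/
def sesq (Q : MvPolynomial (Fin 4) ℂ) (z v w : ℂ × ℂ) : ℂ :=
  (ev (pderiv 0 (pderiv 1 Q)) z (cj z) * v.1 + ev (pderiv 2 (pderiv 1 Q)) z (cj z) * v.2)
    * conj w.1
  + (ev (pderiv 0 (pderiv 3 Q)) z (cj z) * v.1 + ev (pderiv 2 (pderiv 3 Q)) z (cj z) * v.2)
    * conj w.2

/-- The real symmetrisation of the complex Hessian. -/
lemma D2_add_D2_I {P : ℂ × ℂ → ℝ} {Q : MvPolynomial (Fin 4) ℂ}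
    (hQ : ∀ z, (P z : ℂ) = ev Q z (cj z)) (z v w : ℂ × ℂ) :
    ((D2 P z v w + D2 P z (I • v) (I • w) : ℝ) : ℂ) = 2 * (sesq Q z v w + sesq Q z w v) := by
  obtain ⟨R, rfl, hR⟩ := D2_of_ev hQ z v w
  obtain ⟨R, rfl, hR'⟩ := D2_of_ev hQ z (I • v) (I • w)
  have comm := fun i j => pderiv_swap (σ := Fin 4) i j Q
  push_cast
  rw [hR, hR']
  unfold sesq
  rw [comm 0 1, comm 0 3, comm 2 1, comm 2 3]
  simp only [map_add, Derivation.leibniz, MvPolynomial.pderiv_C, smul_eq_mul, mul_zero, add_zero,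
    ev, map_mul, MvPolynomial.eval_C]
  rw [comm 0 1, comm 0 3, comm 2 1, comm 2 3]
  simp
  ring_nf
  simp
  ring

/-- A Levi-null direction of a plurisubharmonic polynomial lies in the kernel of the complex
Hessian. -/
lemma null_dir_kernel {P : ℂ × ℂ → ℝ} {Q : MvPolynomial (Fin 4) ℂ}
    (hQ : ∀ z, (P z : ℂ) = ev Q z (cj z)) {z v : ℂ × ℂ} (hpsh : ∀ v, 0 ≤ lev P z v)
    (hv : lev P z v = 0) :
    ev (pderiv 0 (pderiv 1 Q)) z (cj z) * v.1 + ev (pderiv 2 (pderiv 1 Q)) z (cj z) * v.2 = 0 ∧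
    ev (pderiv 0 (pderiv 3 Q)) z (cj z) * v.1 + ev (pderiv 2 (pderiv 3 Q)) z (cj z) * v.2 = 0 := by
  have hP : ContDiffAt ℝ 2 P z := (contDiff_of_ev hQ).contDiffAt
  have hB : ∀ w, D2 P z v w + D2 P z (I • v) (I • w) = 0 := by
    intro w
    set b := D2 P z v w + D2 P z (I • v) (I • w) with hb
    have hq : ∀ t : ℝ, 0 ≤ 2 * t * b + t ^ 2 * lev P z w := by
      intro t
      have h := hpsh (v + t • w)
      have : lev P z (v + t • w) = lev P z v + 2 * t * b + t ^ 2 * lev P z w := by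
        unfold lev
        rw [smul_add, smul_comm I t w]
        simp only [D2_add_left, D2_add_right, D2_smul_left, D2_smul_right, smul_eq_mul]
        rw [D2_symm hP w v, D2_symm hP (I • w) (I • v), hb]
        ring
      rw [this, hv] at h
      linarith
    have hw := hpsh w
    set l := lev P z w
    -- the quadratic `2tb + t²l` is negative at `t = -b/(l+1)` unless `b = 0`
    have h1 := hq (-b / (l + 1))
    have h2 : 2 * (-b / (l + 1)) * b + (-b / (l + 1)) ^ 2 * l
        = - (b ^ 2 * (l + 2) / (l + 1) ^ 2) := by
      field_simp; ring
    rw [h2] at h1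
    by_contra hne
    have : 0 < b ^ 2 * (l + 2) / (l + 1) ^ 2 := by positivity
    linarith
  have hA : ∀ w, sesq Q z v w + sesq Q z w v = 0 := by
    intro w
    have := D2_add_D2_I hQ z v w
    rw [hB w] at this
    simpa using this.symm
  have hA' : ∀ w, sesq Q z v w = 0 := by
    intro w
    have h1 := hA w
    have h2 := hA (I • w)
    have h3 : sesq Q z v (I • w) = -I * sesq Q z v w := by simp [sesq]; ring
    have h4 : sesq Q z (I • w) v = I * sesq Q z w v := by simp [sesq]; ring
    rw [h3, h4] at h2
    have h5 : I * (2 * sesq Q z v w) = 0 := by linear_combination I * h1 - h2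
    simpa using h5
  constructor
  · simpa [sesq] using hA' (1, 0)
  · simpa [sesq] using hA' (0, 1)

/-- The complex Hessian of the polarised polynomial annihilates the tangent direction
`(-∂₂H, ∂₁H)` of the level curves. -/
lemma polar_kernel {P : ℂ × ℂ → ℝ} {Q : MvPolynomial (Fin 4) ℂ}
    (hQ : ∀ z, (P z : ℂ) = ev Q z (cj z)) (hpsh : ∀ z v, 0 ≤ lev P z v)
    {H : ℂ × ℂ → ℂ} (hH : Differentiable ℂ H)
    (hB : ∀ c : ℂ, HarmonicAlong P (H ⁻¹' {c})) (z w : ℂ × ℂ) :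
    ev (pderiv 0 (pderiv 1 Q)) z w * fderiv ℂ H z (0, 1)
      = ev (pderiv 2 (pderiv 1 Q)) z w * fderiv ℂ H z (1, 0) ∧
    ev (pderiv 0 (pderiv 3 Q)) z w * fderiv ℂ H z (0, 1)
      = ev (pderiv 2 (pderiv 3 Q)) z w * fderiv ℂ H z (1, 0) := by
  have hn : ∀ z, lev P z (-(fderiv ℂ H z (0, 1)), fderiv ℂ H z (1, 0)) = 0 :=
    lev_tangent (contDiff_of_ev hQ) hH hB
  have d1 : Differentiable ℂ (fun p : (ℂ × ℂ) × (ℂ × ℂ) => fderiv ℂ H p.1 (1, 0)) :=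
    (differentiable_fderiv_apply hH (1, 0)).comp differentiable_fst
  have d2 : Differentiable ℂ (fun p : (ℂ × ℂ) × (ℂ × ℂ) => fderiv ℂ H p.1 (0, 1)) :=
    (differentiable_fderiv_apply hH (0, 1)).comp differentiable_fst
  constructor
  · refine sub_eq_zero.1 (polar_two (G := fun z w => ev (pderiv 0 (pderiv 1 Q)) z w
      * fderiv ℂ H z (0, 1) - ev (pderiv 2 (pderiv 1 Q)) z w * fderiv ℂ H z (1, 0)) ?_ ?_ z w)
    · exact ((ev_differentiable _).mul d2).sub ((ev_differentiable _).mul d1)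
    · intro z
      have := (null_dir_kernel hQ (hpsh z) (hn z)).1
      simp only at this ⊢
      linear_combination -this
  · refine sub_eq_zero.1 (polar_two (G := fun z w => ev (pderiv 0 (pderiv 3 Q)) z w
      * fderiv ℂ H z (0, 1) - ev (pderiv 2 (pderiv 3 Q)) z w * fderiv ℂ H z (1, 0)) ?_ ?_ z w)
    · exact ((ev_differentiable _).mul d2).sub ((ev_differentiable _).mul d1)
    · intro z
      have := (null_dir_kernel hQ (hpsh z) (hn z)).2
      simp only at this ⊢
      linear_combination -this

end

/-! ### Homogeneous components -/

section

open MvPolynomial (pderiv C)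

lemma eval_weighted {σ : Type*} [Fintype σ] {wt : σ → ℕ} {R : MvPolynomial σ ℂ} {n : ℕ}
    (hR : R.IsWeightedHomogeneous wt n) (c : ℂ) (x : σ → ℂ) :
    MvPolynomial.eval (fun i => c ^ wt i * x i) R = c ^ n * MvPolynomial.eval x R := by
  rw [MvPolynomial.eval_eq', MvPolynomial.eval_eq', Finset.mul_sum]
  refine Finset.sum_congr rfl fun m hm => ?_
  have hw := hR (MvPolynomial.mem_support_iff.1 hm)
  rw [Finsupp.weight_apply, Finsupp.sum_fintype _ _ (by simp)] at hw
  simp only [mul_pow, Finset.prod_mul_distrib, ← pow_mul, Finset.prod_pow_eq_pow_sum]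
  rw [← hw]
  simp only [smul_eq_mul, mul_comm (wt _)]
  ring

/-- Weight counting the degree in the unconjugated variables. -/
def wz : Fin 4 → ℕ := ![1, 0, 1, 0]
/-- Weight counting the degree in the conjugated variables. -/
def ww : Fin 4 → ℕ := ![0, 1, 0, 1]

lemma weight_wz (m : Fin 4 →₀ ℕ) : Finsupp.weight wz m = m 0 + m 2 := by
  rw [Finsupp.weight_apply, Finsupp.sum_fintype _ _ (by simp)]
  simp [Fin.sum_univ_four, wz]
lemma weight_ww (m : Fin 4 →₀ ℕ) : Finsupp.weight ww m = m 1 + m 3 := by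
  rw [Finsupp.weight_apply, Finsupp.sum_fintype _ _ (by simp)]
  simp [Fin.sum_univ_four, ww]

lemma ev_smul_left {R : MvPolynomial (Fin 4) ℂ} {n : ℕ} (hR : R.IsWeightedHomogeneous wz n)
    (c : ℂ) (z w : ℂ × ℂ) : ev R (c • z) w = c ^ n * ev R z w := by
  rw [ev, ev, ← eval_weighted hR]
  congr 2
  ext i; fin_cases i <;> simp [wz]

lemma ev_smul_right {R : MvPolynomial (Fin 4) ℂ} {n : ℕ} (hR : R.IsWeightedHomogeneous ww n)
    (c : ℂ) (z w : ℂ × ℂ) : ev R z (c • w) = c ^ n * ev R z w := by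
  rw [ev, ev, ← eval_weighted hR]
  congr 2
  ext i; fin_cases i <;> simp [ww]

/-- A polynomial of degree less than `N` with infinitely many zeros has zero coefficients. -/
lemma coeffs_zero_of_sum {N : ℕ} {c : ℕ → ℂ} {S : Set ℂ} (hS : S.Infinite)
    (h : ∀ l ∈ S, ∑ n ∈ Finset.range N, c n * l ^ n = 0) : ∀ n < N, c n = 0 := by
  set p : Polynomial ℂ := ∑ n ∈ Finset.range N, Polynomial.C (c n) * Polynomial.X ^ n with hp
  have h0 : p = 0 := by
    refine Polynomial.eq_zero_of_infinite_isRoot p (hS.mono fun l hl => ?_)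
    simp [hp, Polynomial.IsRoot, Polynomial.eval_finsetSum, h l hl]
  intro n hn
  have := congrArg (fun q => Polynomial.coeff q n) h0
  simpa [hp, Polynomial.finsetSum_coeff, Polynomial.coeff_X_pow, hn] using this

lemma infinite_posReal : (Set.range fun n : ℕ => (((n : ℝ) + 1 : ℝ) : ℂ)).Infinite := by
  refine Set.infinite_range_of_injective fun a b h => ?_
  have : ((a : ℝ) + 1) = (b : ℝ) + 1 := by exact_mod_cast h
  exact_mod_cast add_right_cancel this

/-- A homogeneous real polynomial without pluriharmonic terms is represented by a polynomial all of
whose monomials have total degree `D` and involve both kinds of variables. -/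
lemma exists_homog_rep {P : ℂ × ℂ → ℝ} {D : ℕ} (hnt : NoPluriharmonicTerms P)
    (hhom : HomogeneousDeg P D) :
    ∃ Q : MvPolynomial (Fin 4) ℂ, (∀ z, (P z : ℂ) = ev Q z (cj z)) ∧
      ∀ m ∈ Q.support, (m 0 + m 2) + (m 1 + m 3) = D ∧ 0 < m 0 + m 2 ∧ 0 < m 1 + m 3 := by
  classical
  obtain ⟨Q0, hQ0, hsupp⟩ := hnt
  have hQ0' : ∀ z, (P z : ℂ) = ev Q0 z (cj z) := hQ0
  refine ⟨MvPolynomial.homogeneousComponent D Q0, ?_, ?_⟩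
  · intro z
    set N := max (Q0.totalDegree + 1) (D + 1) with hN
    have hsum : ∀ z w, ev Q0 z w =
        ∑ n ∈ Finset.range N, ev (MvPolynomial.homogeneousComponent n Q0) z w := by
      intro z w
      have : Q0 = ∑ n ∈ Finset.range N, MvPolynomial.homogeneousComponent n Q0 := by
        conv_lhs => rw [← MvPolynomial.sum_homogeneousComponent Q0]
        refine Finset.sum_subset (Finset.range_mono (le_max_left _ _)) fun n _ hn => ?_
        exact MvPolynomial.homogeneousComponent_eq_zero _ _ (by simpa using hn)
      conv_lhs => rw [this]
      simp [ev]
    have hsc : ∀ (n : ℕ) (c : ℂ) (z w), ev (MvPolynomial.homogeneousComponent n Q0) (c • z) (c • w)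
        = c ^ n * ev (MvPolynomial.homogeneousComponent n Q0) z w := by
      intro n c z w
      rw [ev, ev, ← eval_weighted (wt := 1) (MvPolynomial.homogeneousComponent_isHomogeneous n Q0)]
      congr 2
      ext i; fin_cases i <;> simp
    have key := coeffs_zero_of_sum (N := N) infinite_posReal
      (c := fun n => ev (MvPolynomial.homogeneousComponent n Q0) z (cj z)
        - if n = D then (P z : ℂ) else 0) (by
      rintro _ ⟨n, rfl⟩
      set t : ℝ := (n : ℝ) + 1 with ht
      have ht0 : 0 < t := by positivity
      have h1 := hhom t ht0 z
      have h2 : (P (t • z) : ℂ) = ∑ n ∈ Finset.range N,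
          ev (MvPolynomial.homogeneousComponent n Q0) z (cj z) * (t : ℂ) ^ n := by
        rw [hQ0', hsum]
        refine Finset.sum_congr rfl fun n _ => ?_
        have e1 : t • z = (t : ℂ) • z := by ext <;> simp
        have e2 : cj (t • z) = (t : ℂ) • cj z := by ext <;> simp [cj]
        rw [e2, e1, hsc, mul_comm]
      rw [h1] at h2
      simp only [sub_mul, Finset.sum_sub_distrib]
      rw [← h2]
      have hD : D ∈ Finset.range N := by simp [hN]
      simp only [ite_mul, zero_mul, Finset.sum_ite_eq', hD, if_true]
      rw [ht]
      push_cast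
      ring)
    have := key D (by simp [hN])
    simp only [if_true] at this
    exact (sub_eq_zero.1 this).symm
  · intro m hm
    rw [MvPolynomial.mem_support_iff, MvPolynomial.coeff_homogeneousComponent] at hm
    have hd : m.degree = D := by
      by_contra h; simp [h] at hm
    rw [if_pos hd] at hm
    have := hsupp m (MvPolynomial.mem_support_iff.2 hm)
    rw [Finsupp.degree_eq_sum, Fin.sum_univ_four] at hd
    omega

/-- The part of `Q` of degree `b` in the conjugated variables. -/
def conjPart (Q : MvPolynomial (Fin 4) ℂ) (b : ℕ) : MvPolynomial (Fin 4) ℂ :=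
  MvPolynomial.weightedHomogeneousComponent ww b Q

lemma conjPart_ww (Q : MvPolynomial (Fin 4) ℂ) (b : ℕ) : (conjPart Q b).IsWeightedHomogeneous ww b :=
  MvPolynomial.weightedHomogeneousComponent_isWeightedHomogeneous b Q

lemma coeff_conjPart (Q : MvPolynomial (Fin 4) ℂ) (b : ℕ) (m) :
    (conjPart Q b).coeff m = if m 1 + m 3 = b then Q.coeff m else 0 := by
  classical
  rw [conjPart, MvPolynomial.coeff_weightedHomogeneousComponent, weight_ww]

lemma conjPart_wz {Q : MvPolynomial (Fin 4) ℂ} {D : ℕ}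
    (hQ : ∀ m ∈ Q.support, (m 0 + m 2) + (m 1 + m 3) = D ∧ 0 < m 0 + m 2 ∧ 0 < m 1 + m 3) (b : ℕ) :
    (conjPart Q b).IsWeightedHomogeneous wz (D - b) := by
  intro m hm
  rw [coeff_conjPart] at hm
  have h1 : m 1 + m 3 = b := by by_contra h; simp [h] at hm
  rw [if_pos h1] at hm
  have := hQ m (MvPolynomial.mem_support_iff.2 hm)
  rw [weight_wz]
  omega

lemma sum_conjPart {Q : MvPolynomial (Fin 4) ℂ} {D : ℕ}
    (hQ : ∀ m ∈ Q.support, (m 0 + m 2) + (m 1 + m 3) = D ∧ 0 < m 0 + m 2 ∧ 0 < m 1 + m 3) :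
    Q = ∑ b ∈ Finset.range D, conjPart Q b := by
  ext m
  rw [MvPolynomial.coeff_sum]
  simp only [coeff_conjPart]
  rw [Finset.sum_ite_eq]
  split_ifs with h
  · rfl
  · by_contra hne
    have := hQ m (MvPolynomial.mem_support_iff.2 hne)
    simp at h
    omega

lemma conjPart_zero {Q : MvPolynomial (Fin 4) ℂ} {D : ℕ}
    (hQ : ∀ m ∈ Q.support, (m 0 + m 2) + (m 1 + m 3) = D ∧ 0 < m 0 + m 2 ∧ 0 < m 1 + m 3) :
    conjPart Q 0 = 0 := by
  ext m
  rw [coeff_conjPart]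
  split_ifs with h
  · by_contra hne
    have := hQ m (MvPolynomial.mem_support_iff.2 hne)
    omega
  · simp

lemma euler_ww {R : MvPolynomial (Fin 4) ℂ} {n : ℕ} (hR : R.IsWeightedHomogeneous ww n)
    (z w : ℂ × ℂ) : ev (pderiv 1 R) z w * w.1 + ev (pderiv 3 R) z w * w.2 = n * ev R z w := by
  have := congrArg (fun q => ev q z w) hR.sum_weight_X_mul_pderiv
  simp [Fin.sum_univ_four, ww, ev] at this
  simp only [ev]
  linear_combination this

lemma euler_wz {R : MvPolynomial (Fin 4) ℂ} {n : ℕ} (hR : R.IsWeightedHomogeneous wz n)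
    (z w : ℂ × ℂ) : ev (pderiv 0 R) z w * z.1 + ev (pderiv 2 R) z w * z.2 = n * ev R z w := by
  have := congrArg (fun q => ev q z w) hR.sum_weight_X_mul_pderiv
  simp [Fin.sum_univ_four, wz, ev] at this
  simp only [ev]
  linear_combination this

lemma ev_sum {ι : Type*} (s : Finset ι) (f : ι → MvPolynomial (Fin 4) ℂ) (z w : ℂ × ℂ) :
    ev (∑ i ∈ s, f i) z w = ∑ i ∈ s, ev (f i) z w := by simp [ev]

end

/-! ### Proportionality of logarithmic derivatives -/

section

open MvPolynomial (pderiv C)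

/-- Each conjugate-degree component of `Q` is, in the unconjugated variables, constant along the
foliation defined by the 1-form `h₁ dz₁ + h₂ dz₂`. -/
lemma conjPart_kernel {Q : MvPolynomial (Fin 4) ℂ} {D : ℕ}
    (hQ : ∀ m ∈ Q.support, (m 0 + m 2) + (m 1 + m 3) = D ∧ 0 < m 0 + m 2 ∧ 0 < m 1 + m 3)
    {h1 h2 : ℂ × ℂ → ℂ}
    (hk : ∀ z w, ev (pderiv 0 (pderiv 1 Q)) z w * h2 z = ev (pderiv 2 (pderiv 1 Q)) z w * h1 z ∧
      ev (pderiv 0 (pderiv 3 Q)) z w * h2 z = ev (pderiv 2 (pderiv 3 Q)) z w * h1 z)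
    {b : ℕ} (hb : b < D) (z w : ℂ × ℂ) :
    ev (pderiv 0 (conjPart Q b)) z w * h2 z = ev (pderiv 2 (conjPart Q b)) z w * h1 z := by
  rcases Nat.eq_zero_or_pos b with rfl | hb0
  · simp [conjPart_zero hQ, ev]
  have hder : ∀ i : Fin 4, ww i = 0 → ∀ b,
      (pderiv i (conjPart Q b)).IsWeightedHomogeneous ww b := fun i hi b =>
    (conjPart_ww Q b).pderiv (by simp [hi])
  have hE : ∀ i : Fin 4, ww i = 0 → ∀ (z w : ℂ × ℂ) (l : ℂ),
      ev (pderiv i (pderiv 1 Q)) z (l • w) * (l * w.1)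
        + ev (pderiv i (pderiv 3 Q)) z (l • w) * (l * w.2)
      = ∑ b ∈ Finset.range D, b * (ev (pderiv i (conjPart Q b)) z w) * l ^ b := by
    intro i hi z w l
    have e1 : ∀ k : Fin 4, pderiv i (pderiv k Q)
        = ∑ b ∈ Finset.range D, pderiv k (pderiv i (conjPart Q b)) := by
      intro k
      rw [pderiv_swap]
      conv_lhs => rw [sum_conjPart hQ]
      simp
    rw [e1, e1, ev_sum, ev_sum, Finset.sum_mul, Finset.sum_mul, ← Finset.sum_add_distrib]
    refine Finset.sum_congr rfl fun b _ => ?_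
    have := euler_ww (hder i hi b) z (l • w)
    rw [ev_smul_right (hder i hi b)] at this
    simp only [Prod.smul_fst, Prod.smul_snd, smul_eq_mul] at this
    rw [this]; ring
  have key := coeffs_zero_of_sum (N := D) (S := univ) infinite_univ
    (c := fun b => b * (ev (pderiv 0 (conjPart Q b)) z w * h2 z
      - ev (pderiv 2 (conjPart Q b)) z w * h1 z)) (by
    intro l _
    have h0 := hE 0 rfl z w l
    have h2' := hE 2 rfl z w l
    obtain ⟨k1, k3⟩ := hk z (l • w)
    have : ∑ n ∈ Finset.range D, (n : ℂ) * (ev (pderiv 0 (conjPart Q n)) z w * h2 z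
      - ev (pderiv 2 (conjPart Q n)) z w * h1 z) * l ^ n =
      (∑ b ∈ Finset.range D, b * (ev (pderiv 0 (conjPart Q b)) z w) * l ^ b) * h2 z
      - (∑ b ∈ Finset.range D, b * (ev (pderiv 2 (conjPart Q b)) z w) * l ^ b) * h1 z := by
      rw [Finset.sum_mul, Finset.sum_mul, ← Finset.sum_sub_distrib]
      refine Finset.sum_congr rfl fun b _ => ?_
      ring
    rw [this, ← h0, ← h2']
    linear_combination (l * w.1) * k1 + (l * w.2) * k3)
  have := key b hb
  simp only [mul_eq_zero, Nat.cast_eq_zero, hb0.ne', false_or] at this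
  exact sub_eq_zero.1 this

/-- All components, as functions of `z`, have proportional logarithmic derivatives: the common
foliation and Euler's identity in `z` determine the logarithmic derivative up to the degree. -/
lemma conjPart_log_deriv {Q : MvPolynomial (Fin 4) ℂ} {D : ℕ}
    (hQ : ∀ m ∈ Q.support, (m 0 + m 2) + (m 1 + m 3) = D ∧ 0 < m 0 + m 2 ∧ 0 < m 1 + m 3)
    {h1 h2 : ℂ × ℂ → ℂ} (d1 : Differentiable ℂ h1) (d2 : Differentiable ℂ h2)
    (hne : ∃ z, h1 z ≠ 0 ∨ h2 z ≠ 0)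
    (hk : ∀ z w, ev (pderiv 0 (pderiv 1 Q)) z w * h2 z = ev (pderiv 2 (pderiv 1 Q)) z w * h1 z ∧
      ev (pderiv 0 (pderiv 3 Q)) z w * h2 z = ev (pderiv 2 (pderiv 3 Q)) z w * h1 z)
    {b b' : ℕ} (hb : b < D) (hb' : b' < D) (z w w' : ℂ × ℂ) :
    ((D - b : ℕ) : ℂ) * ev (conjPart Q b) z w * ev (pderiv 0 (conjPart Q b')) z w'
      = ((D - b' : ℕ) : ℂ) * ev (conjPart Q b') z w' * ev (pderiv 0 (conjPart Q b)) z w := by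
  set J : ℂ × ℂ → ℂ := fun z =>
    ((D - b : ℕ) : ℂ) * ev (conjPart Q b) z w * ev (pderiv 0 (conjPart Q b')) z w'
      - ((D - b' : ℕ) : ℂ) * ev (conjPart Q b') z w' * ev (pderiv 0 (conjPart Q b)) z w with hJ
  have hd : ∀ R w, Differentiable ℂ (fun z => ev R z w) := fun R w =>
    (ev_differentiable R).comp (f := fun z : ℂ × ℂ => (z, w)) (by fun_prop)
  have dJ : Differentiable ℂ J := by
    have a1 := hd (conjPart Q b) w
    have a2 := hd (pderiv 0 (conjPart Q b')) w'
    have a3 := hd (conjPart Q b') w'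
    have a4 := hd (pderiv 0 (conjPart Q b)) w
    simp only [hJ]
    fun_prop
  have e : ∀ z, J z = z.2 * (ev (pderiv 2 (conjPart Q b)) z w * ev (pderiv 0 (conjPart Q b')) z w'
      - ev (pderiv 2 (conjPart Q b')) z w' * ev (pderiv 0 (conjPart Q b)) z w) := by
    intro z
    simp only [hJ]
    rw [← euler_wz (conjPart_wz hQ b) z w, ← euler_wz (conjPart_wz hQ b') z w']
    ring
  have m1 : ∀ z, h1 z * J z = 0 := by
    intro z
    have k1 := conjPart_kernel hQ hk hb z w
    have k2 := conjPart_kernel hQ hk hb' z w'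
    rw [e]
    linear_combination (-z.2 * ev (pderiv 0 (conjPart Q b')) z w') * k1
      + (z.2 * ev (pderiv 0 (conjPart Q b)) z w) * k2
  have m2 : ∀ z, h2 z * J z = 0 := by
    intro z
    have k1 := conjPart_kernel hQ hk hb z w
    have k2 := conjPart_kernel hQ hk hb' z w'
    rw [e]
    linear_combination (-z.2 * ev (pderiv 2 (conjPart Q b')) z w') * k1
      + (z.2 * ev (pderiv 2 (conjPart Q b)) z w) * k2
  obtain ⟨z0, h0 | h0⟩ := hne
  · exact sub_eq_zero.1 (entire_mul_eq_zero d1 dJ m1 h0 z)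
  · exact sub_eq_zero.1 (entire_mul_eq_zero d2 dJ m2 h0 z)

/-- Dehomogenisation `R(X, 1; w)` of a polynomial in the unconjugated variables. -/
def deh (R : MvPolynomial (Fin 4) ℂ) (w : ℂ × ℂ) : Polynomial ℂ :=
  MvPolynomial.aeval ![Polynomial.X, Polynomial.C w.1, 1, Polynomial.C w.2] R

lemma eval_deh (R : MvPolynomial (Fin 4) ℂ) (w : ℂ × ℂ) (x : ℂ) :
    (deh R w).eval x = ev R (x, 1) w := by
  unfold deh ev
  induction R using MvPolynomial.induction_on with
  | C a => simp
  | add p q hp hq => simp [hp, hq]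
  | mul_X p j hp =>
    rw [map_mul, Polynomial.eval_mul, hp, map_mul]
    congr 1
    fin_cases j <;> simp

lemma derivative_deh (R : MvPolynomial (Fin 4) ℂ) (w : ℂ × ℂ) :
    Polynomial.derivative (deh R w) = deh (pderiv 0 R) w := by
  unfold deh
  induction R using MvPolynomial.induction_on with
  | C a => simp
  | add p q hp hq => simp [hp, hq]
  | mul_X p j hp =>
    rw [map_mul, Polynomial.derivative_mul, hp]
    fin_cases j <;> simp [MvPolynomial.pderiv_X] <;> ring

lemma natDegree_deh {R : MvPolynomial (Fin 4) ℂ} {a : ℕ} (hR : R.IsWeightedHomogeneous wz a)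
    (w : ℂ × ℂ) : (deh R w).natDegree ≤ a := by
  unfold deh
  rw [MvPolynomial.aeval_def, MvPolynomial.eval₂_eq']
  refine Polynomial.natDegree_sum_le_of_forall_le _ _ fun m hm => ?_
  have h := hR (MvPolynomial.mem_support_iff.1 hm)
  rw [weight_wz] at h
  have : (algebraMap ℂ (Polynomial ℂ)) (MvPolynomial.coeff m R) *
      ∏ i, (![Polynomial.X, Polynomial.C w.1, 1, Polynomial.C w.2] : Fin 4 → Polynomial ℂ) i ^ m i
      = Polynomial.C (R.coeff m * w.1 ^ m 1 * w.2 ^ m 3) * Polynomial.X ^ m 0 := by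
    simp [Fin.prod_univ_four]
    ring
  rw [this]
  exact (Polynomial.natDegree_C_mul_X_pow_le _ _).trans (by omega)

lemma ev_eq_deh {R : MvPolynomial (Fin 4) ℂ} {a : ℕ} (hR : R.IsWeightedHomogeneous wz a)
    (z w : ℂ × ℂ) (hz : z.2 ≠ 0) : ev R z w = z.2 ^ a * (deh R w).eval (z.1 / z.2) := by
  rw [eval_deh, ← ev_smul_left hR]
  congr 1
  ext <;> simp [mul_div_cancel₀, hz]

/-- The relation of `conjPart_log_deriv` between dehomogenised components, as an identity of
univariate polynomials. -/
lemma deh_log_deriv {Q : MvPolynomial (Fin 4) ℂ} {D : ℕ}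
    (hQ : ∀ m ∈ Q.support, (m 0 + m 2) + (m 1 + m 3) = D ∧ 0 < m 0 + m 2 ∧ 0 < m 1 + m 3)
    {h1 h2 : ℂ × ℂ → ℂ} (d1 : Differentiable ℂ h1) (d2 : Differentiable ℂ h2)
    (hne : ∃ z, h1 z ≠ 0 ∨ h2 z ≠ 0)
    (hk : ∀ z w, ev (pderiv 0 (pderiv 1 Q)) z w * h2 z = ev (pderiv 2 (pderiv 1 Q)) z w * h1 z ∧
      ev (pderiv 0 (pderiv 3 Q)) z w * h2 z = ev (pderiv 2 (pderiv 3 Q)) z w * h1 z)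
    {b b' : ℕ} (hb : b < D) (hb' : b' < D) (w w' : ℂ × ℂ) :
    ((D - b : ℕ) : Polynomial ℂ) * deh (conjPart Q b) w
        * Polynomial.derivative (deh (conjPart Q b') w')
      = ((D - b' : ℕ) : Polynomial ℂ) * deh (conjPart Q b') w'
        * Polynomial.derivative (deh (conjPart Q b) w) := by
  refine Polynomial.funext fun x => ?_
  rw [derivative_deh, derivative_deh]
  simp only [Polynomial.eval_mul, Polynomial.eval_natCast, eval_deh]
  exact conjPart_log_deriv hQ d1 d2 hne hk hb hb' _ w w'

end

/-! ### Polynomials with proportional logarithmic derivatives are powers of one polynomial -/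

section univariate
open Polynomial

/-- `f` behaves like the power `f₀ ^ (a / a₀)`: `a f f₀' = a₀ f₀ f'`. -/
def Cl (f0 : ℂ[X]) (a0 a : ℕ) (f : ℂ[X]) : Prop :=
  (a : ℂ[X]) * f * derivative f0 = (a0 : ℂ[X]) * f0 * derivative f

variable {f0 : ℂ[X]} {a0 : ℕ}

lemma Cl.mul {a b : ℕ} {f g : ℂ[X]} (hf : Cl f0 a0 a f) (hg : Cl f0 a0 b g) :
    Cl f0 a0 (a + b) (f * g) := by
  unfold Cl at *
  rw [derivative_mul]; push_cast
  linear_combination g * hf + f * hg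

lemma Cl.one : Cl f0 a0 0 1 := by simp [Cl]

lemma Cl.pow {a : ℕ} {f : ℂ[X]} (hf : Cl f0 a0 a f) (n : ℕ) : Cl f0 a0 (a * n) (f ^ n) := by
  induction n with
  | zero => simpa using Cl.one
  | succ n ih => rw [pow_succ, mul_add, mul_one]; exact ih.mul hf

lemma Cl.of_mul {a b : ℕ} {g h : ℂ[X]} (hg0 : g ≠ 0) (hg : Cl f0 a0 b g)
    (hf : Cl f0 a0 (a + b) (g * h)) : Cl f0 a0 a h := by
  unfold Cl at *
  rw [derivative_mul] at hf; push_cast at hf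
  apply mul_left_cancel₀ hg0
  linear_combination hf - h * hg

/-- Comparison of the leading coefficients of the two sides of the defining relation. -/
lemma Cl.degree_eq {a : ℕ} {f : ℂ[X]} (hf : Cl f0 a0 a f) (h0 : f ≠ 0) (hf0 : f0 ≠ 0) :
    a * f0.natDegree = a0 * f.natDegree := by
  have key : ∀ g : ℂ[X], (X * derivative g).natDegree ≤ g.natDegree ∧
      (X * derivative g).coeff g.natDegree = g.natDegree * g.leadingCoeff := by
    intro g
    have hc : ∀ k, (X * derivative g).coeff k = k * g.coeff k := by
      intro k
      cases k with
      | zero => simp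
      | succ k => rw [coeff_X_mul, coeff_derivative]; push_cast; ring
    refine ⟨natDegree_le_iff_coeff_eq_zero.2 fun k hk => ?_, hc _⟩
    rw [hc, coeff_eq_zero_of_natDegree_lt hk, mul_zero]
  have e : C (a : ℂ) * (f * (X * derivative f0)) = C (a0 : ℂ) * (f0 * (X * derivative f)) := by
    unfold Cl at hf
    simp only [map_natCast]
    linear_combination X * hf
  have e2 := congrArg (fun p => coeff p (f.natDegree + f0.natDegree)) e
  simp only [coeff_C_mul] at e2
  rw [coeff_mul_add_eq_of_natDegree_le le_rfl (key f0).1, add_comm,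
    coeff_mul_add_eq_of_natDegree_le le_rfl (key f).1, (key f).2, (key f0).2] at e2
  have h1 : f.leadingCoeff ≠ 0 := leadingCoeff_ne_zero.2 h0
  have h2 : f0.leadingCoeff ≠ 0 := leadingCoeff_ne_zero.2 hf0
  have e3 : (f.leadingCoeff * f0.leadingCoeff) * ((a * f0.natDegree : ℕ) : ℂ)
      = (f.leadingCoeff * f0.leadingCoeff) * ((a0 * f.natDegree : ℕ) : ℂ) := by
    push_cast
    simp only [coeff_natDegree] at e2
    linear_combination e2
  exact_mod_cast mul_left_cancel₀ (mul_ne_zero h1 h2) e3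

/-- Members of equal weight are proportional: a combination cancelling the leading terms would have
the wrong degree. -/
lemma Cl.proportional {a : ℕ} {f g : ℂ[X]} (ha0 : 0 < a0) (hf0 : f0 ≠ 0) (hf : Cl f0 a0 a f)
    (hg : Cl f0 a0 a g) (hf' : f ≠ 0) (hg' : g ≠ 0) : ∃ c : ℂ, c ≠ 0 ∧ f = C c * g := by
  have h1 := hf.degree_eq hf' hf0
  have h2 := hg.degree_eq hg' hf0
  have hn : f.natDegree = g.natDegree := Nat.eq_of_mul_eq_mul_left ha0 (h1.symm.trans h2)
  have l1 : f.leadingCoeff ≠ 0 := leadingCoeff_ne_zero.2 hf'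
  have l2 : g.leadingCoeff ≠ 0 := leadingCoeff_ne_zero.2 hg'
  refine ⟨f.leadingCoeff / g.leadingCoeff, div_ne_zero l1 l2, ?_⟩
  set c := f.leadingCoeff / g.leadingCoeff with hc
  by_contra hne
  have hh : Cl f0 a0 a (f - C c * g) := by
    unfold Cl at *
    simp only [derivative_sub, derivative_C_mul]
    linear_combination hf - C c * hg
  have h3 := hh.degree_eq (sub_ne_zero.2 hne) hf0
  have h4 : (f - C c * g).natDegree = f.natDegree :=
    Nat.eq_of_mul_eq_mul_left ha0 (h3.symm.trans h1)
  have h5 : (f - C c * g).leadingCoeff = 0 := by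
    rw [leadingCoeff, h4, coeff_sub, coeff_C_mul, hn, coeff_natDegree, ← hn, coeff_natDegree, hc]
    field_simp
    ring
  exact hne (sub_eq_zero.1 (leadingCoeff_eq_zero.1 h5))

/-- All nonzero members of the classes `Cl f₀ a₀ a` are scalar multiples of powers of a single
polynomial `F`, the member of least positive weight `d`. -/
lemma exists_common_root (ha0 : 0 < a0) (hf0 : f0 ≠ 0) (hdeg : f0.natDegree ≤ a0) :
    ∃ (d : ℕ) (F : ℂ[X]), 0 < d ∧ F ≠ 0 ∧ F.natDegree ≤ d ∧
      ∀ a f, f ≠ 0 → Cl f0 a0 a f → ∃ s c, a = d * s ∧ f = C c * F ^ s := by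
  classical
  have hex : ∃ d, 0 < d ∧ ∃ F, F ≠ 0 ∧ Cl f0 a0 d F := ⟨a0, ha0, f0, hf0, rfl⟩
  obtain ⟨hd, F, hF0, hF⟩ := Nat.find_spec hex
  set d := Nat.find hex with hdd
  refine ⟨d, F, hd, hF0, ?_, ?_⟩
  · have := hF.degree_eq hF0 hf0
    have h2 : a0 * F.natDegree ≤ a0 * d := by
      rw [← this, mul_comm]; exact Nat.mul_le_mul_right _ hdeg
    exact Nat.le_of_mul_le_mul_left h2 ha0
  · intro a
    induction a using Nat.strong_induction_on with
    | _ a ih =>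
    intro f hf hcl
    rcases Nat.eq_zero_or_pos a with rfl | ha
    · obtain ⟨c, _, hc⟩ := hcl.proportional ha0 hf0 Cl.one hf one_ne_zero
      exact ⟨0, c, by simp, by simpa using hc⟩
    have hda : d ≤ a := Nat.find_min' hex ⟨ha, f, hf, hcl⟩
    have c1 : Cl f0 a0 (a * d) (f ^ d) := hcl.pow d
    have c2 : Cl f0 a0 (a * d) (F ^ a) := by rw [mul_comm]; exact hF.pow a
    obtain ⟨c, _, hc⟩ := c1.proportional ha0 hf0 c2 (pow_ne_zero _ hf) (pow_ne_zero _ hF0)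
    -- unique factorisation gives `F ∣ f`, and the quotient has smaller weight
    have hdvd : F ^ d ∣ f ^ d := by
      rw [hc]; exact (pow_dvd_pow F hda).mul_left _
    obtain ⟨h, rfl⟩ := (UniqueFactorizationMonoid.pow_dvd_pow_iff_dvd hd.ne').1 hdvd
    have hh0 : h ≠ 0 := right_ne_zero_of_mul hf
    have hhc : Cl f0 a0 (a - d) h := Cl.of_mul hF0 hF (by rwa [Nat.sub_add_cancel hda])
    obtain ⟨s, c', hs, hc'⟩ := ih (a - d) (by omega) h hh0 hhc
    refine ⟨s + 1, c', ?_, ?_⟩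
    · rw [mul_add, mul_one, ← hs]; omega
    · rw [hc', pow_succ]; ring
end univariate

/-! ### Factorisation of the components through one polynomial -/

section

open MvPolynomial (pderiv C)

/-- Property (B) yields entire `h1, h2`, not both identically zero, such that `(-h2, h1)` is in the
kernel of the polarised complex Hessian. When the given entire function is constant, the whole
Hessian vanishes and constants can be used. -/
lemma exists_kernel {P : ℂ × ℂ → ℝ} {Q : MvPolynomial (Fin 4) ℂ}
    (hQ : ∀ z, (P z : ℂ) = ev Q z (cj z)) (hpsh : ∀ z v, 0 ≤ lev P z v) (hB : PropertyB P) :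
    ∃ h1 h2 : ℂ × ℂ → ℂ, Differentiable ℂ h1 ∧ Differentiable ℂ h2 ∧
      (∃ z, h1 z ≠ 0 ∨ h2 z ≠ 0) ∧
      ∀ z w, ev (pderiv 0 (pderiv 1 Q)) z w * h2 z = ev (pderiv 2 (pderiv 1 Q)) z w * h1 z ∧
        ev (pderiv 0 (pderiv 3 Q)) z w * h2 z = ev (pderiv 2 (pderiv 3 Q)) z w * h1 z := by
  obtain ⟨H, hH, hB⟩ := hB
  by_cases h0 : ∃ z, fderiv ℂ H z (1, 0) ≠ 0 ∨ fderiv ℂ H z (0, 1) ≠ 0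
  · exact ⟨fun z => fderiv ℂ H z (1, 0), fun z => fderiv ℂ H z (0, 1),
      differentiable_fderiv_apply hH _, differentiable_fderiv_apply hH _, h0,
      polar_kernel hQ hpsh hH hB⟩
  · push Not at h0
    have hz : ∀ z, fderiv ℂ H z = 0 := by
      intro z
      ext
      · simpa using (h0 z).1
      · simpa using (h0 z).2
    have hlev : ∀ z v, lev P z v = 0 := lev_of_fderiv_zero (contDiff_of_ev hQ) hH hB hz
    refine ⟨fun _ => 1, fun _ => 0, differentiable_const _, differentiable_const _,
      ⟨0, Or.inl one_ne_zero⟩, fun z w => ?_⟩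
    have e := fun z => null_dir_kernel hQ (hpsh z) (hlev z (0, 1))
    constructor
    · have := polar_two (G := ev (pderiv 2 (pderiv 1 Q))) (ev_differentiable _)
        (fun z => by simpa using (e z).1) z w
      simp [this]
    · have := polar_two (G := ev (pderiv 2 (pderiv 3 Q))) (ev_differentiable _)
        (fun z => by simpa using (e z).2) z w
      simp [this]

/-- The homogenisation of degree `d` of a univariate polynomial. -/
def hgz (F : Polynomial ℂ) (d : ℕ) (z : ℂ × ℂ) : ℂ :=
  ∑ i ∈ Finset.range (d + 1), F.coeff i * (z.1 ^ i * z.2 ^ (d - i))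

lemma hgz_poly (F : Polynomial ℂ) (d : ℕ) : IsPolyMap2 (hgz F d) := by
  refine ⟨∑ i ∈ Finset.range (d + 1), C (F.coeff i) *
    (MvPolynomial.X 0 ^ i * MvPolynomial.X 1 ^ (d - i)), fun z => ?_⟩
  simp [hgz]

lemma hgz_smul (F : Polynomial ℂ) (d : ℕ) (c : ℂ) (z : ℂ × ℂ) :
    hgz F d (c • z) = c ^ d * hgz F d z := by
  unfold hgz
  rw [Finset.mul_sum]
  refine Finset.sum_congr rfl fun i hi => ?_
  have : i + (d - i) = d := by have := Finset.mem_range.1 hi; omega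
  have hc : c ^ d = c ^ i * c ^ (d - i) := by rw [← pow_add, this]
  simp only [Prod.smul_fst, Prod.smul_snd, smul_eq_mul, mul_pow, hc]
  ring

lemma hgz_one {F : Polynomial ℂ} {d : ℕ} (hF : F.natDegree ≤ d) (x : ℂ) :
    hgz F d (x, 1) = F.eval x := by
  rw [Polynomial.eval_eq_sum_range' (Nat.lt_succ_of_le hF)]
  simp [hgz]

lemma hgz_differentiable (F : Polynomial ℂ) (d : ℕ) : Differentiable ℂ (hgz F d) := by
  unfold hgz
  fun_prop

lemma ev_differentiable_left (R : MvPolynomial (Fin 4) ℂ) (w : ℂ × ℂ) :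
    Differentiable ℂ (fun z => ev R z w) := by
  have h : Differentiable ℂ (fun z : ℂ × ℂ => (z, w)) := by fun_prop
  generalize hG : (fun p : (ℂ × ℂ) × (ℂ × ℂ) => ev R p.1 p.2) = G
  have hGd : Differentiable ℂ G := hG ▸ ev_differentiable R
  have e : (fun z => ev R z w) = fun z => G (z, w) := by rw [← hG]
  rw [e]
  exact hGd.comp h

/-- `P` being nonzero, all conjugate-degree parts of its polarisation are constant multiples of
powers of a single homogeneous holomorphic polynomial `F`. -/
lemma exists_factor {P : ℂ × ℂ → ℝ} {D : ℕ} {Q : MvPolynomial (Fin 4) ℂ}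
    (hQ : ∀ z, (P z : ℂ) = ev Q z (cj z))
    (hs : ∀ m ∈ Q.support, (m 0 + m 2) + (m 1 + m 3) = D ∧ 0 < m 0 + m 2 ∧ 0 < m 1 + m 3)
    (hpsh : ∀ z v, 0 ≤ lev P z v) (hB : PropertyB P) (hP : ∃ z, P z ≠ 0) :
    ∃ (d : ℕ) (F : ℂ × ℂ → ℂ), 0 < d ∧ IsPolyMap2 F ∧ Differentiable ℂ F ∧
      (∀ c z, F (c • z) = c ^ d * F z) ∧ (∃ z, F z ≠ 0) ∧
      ∀ b < D, ∀ w, ∃ (s : ℕ) (c : ℂ), (c = 0 ∨ D - b = d * s) ∧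
        ∀ z, ev (conjPart Q b) z w = c * F z ^ s := by
  obtain ⟨h1, h2, d1, d2, hne, hk⟩ := exists_kernel hQ hpsh hB
  have key : ∀ (R : MvPolynomial (Fin 4) ℂ) (w : ℂ × ℂ) (g : ℂ × ℂ → ℂ), Differentiable ℂ g →
      (∀ z : ℂ × ℂ, z.2 ≠ 0 → ev R z w = g z) → ∀ z, ev R z w = g z := by
    intro R w g hg h z
    have hR : Differentiable ℂ (fun z => ev R z w) := ev_differentiable_left R w
    refine sub_eq_zero.1 (entire_mul_eq_zero (f := fun z : ℂ × ℂ => z.2)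
      (g := fun z => ev R z w - g z) differentiable_snd (hR.sub hg) (fun z => ?_)
      (z0 := (0, 1)) one_ne_zero z)
    by_cases hz : z.2 = 0
    · simp [hz]
    · simp [h z hz]
  have hex : ∃ b < D, ∃ w, deh (conjPart Q b) w ≠ 0 := by
    by_contra hcon
    push Not at hcon
    obtain ⟨z, hz⟩ := hP
    apply hz
    have : ev Q z (cj z) = 0 := by
      conv_lhs => rw [sum_conjPart hs]
      rw [ev_sum]
      refine Finset.sum_eq_zero fun b hb => ?_
      refine key _ _ (fun _ => 0) (differentiable_const _) (fun y hy => ?_) z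
      rw [ev_eq_deh (conjPart_wz hs b) _ _ hy, hcon b (Finset.mem_range.1 hb)]
      simp
    have h := hQ z
    rw [this] at h
    exact_mod_cast h
  obtain ⟨b0, hb0, w0, hf0⟩ := hex
  obtain ⟨d, F, hd, hF0, hFd, hF⟩ := exists_common_root (a0 := D - b0) (by omega) hf0
    (natDegree_deh (conjPart_wz hs b0) w0)
  refine ⟨d, hgz F d, hd, hgz_poly F d, hgz_differentiable F d, hgz_smul F d, ?_, ?_⟩
  · by_contra hcon
    push Not at hcon
    exact hF0 (Polynomial.funext fun x => by rw [← hgz_one hFd, hcon]; simp)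
  · intro b hb w
    by_cases h0 : deh (conjPart Q b) w = 0
    · refine ⟨0, 0, Or.inl rfl, key _ _ _ (by have := hgz_differentiable F d; fun_prop) fun z hz => ?_⟩
      rw [ev_eq_deh (conjPart_wz hs b) _ _ hz, h0]
      simp
    · obtain ⟨s, c, hsc, hc⟩ := hF (D - b) _ h0
        (deh_log_deriv hs d1 d2 hne hk hb hb0 w w0)
      refine ⟨s, c, Or.inr hsc, key _ _ _ (by have := hgz_differentiable F d; fun_prop) fun z hz => ?_⟩
      rw [ev_eq_deh (conjPart_wz hs b) _ _ hz, hc]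
      have : hgz F d z = z.2 ^ d * F.eval (z.1 / z.2) := by
        rw [← hgz_one hFd, ← hgz_smul]
        congr 1
        ext <;> simp [mul_div_cancel₀, hz]
      rw [this, hsc]
      simp [mul_pow, pow_mul]
      ring

end

/-! ### The factorisation `P = U ∘ F` -/

section

open MvPolynomial (pderiv C)

lemma cj_cj (z : ℂ × ℂ) : cj (cj z) = z := by simp [cj]

lemma cj_smul (c : ℂ) (z : ℂ × ℂ) : cj (c • z) = conj c • cj z := by simp [cj]

lemma conj_ev (R : MvPolynomial (Fin 4) ℂ) (z w : ℂ × ℂ) :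
    conj (ev R z w) = ev (MvPolynomial.map (starRingEnd ℂ) R) (cj z) (cj w) := by
  unfold ev
  rw [MvPolynomial.eval_map]
  rw [← MvPolynomial.eval₂_id, MvPolynomial.eval₂_comp_left (starRingEnd ℂ)]
  congr 1
  ext i; fin_cases i <;> simp [cj]

/-- The polarisation of a real polynomial is Hermitian symmetric. -/
lemma ev_hermitian {P : ℂ × ℂ → ℝ} {Q : MvPolynomial (Fin 4) ℂ}
    (hQ : ∀ z, (P z : ℂ) = ev Q z (cj z)) (z w : ℂ × ℂ) :
    ev Q z w = conj (ev Q (cj w) (cj z)) := by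
  rw [conj_ev, cj_cj, cj_cj]
  refine sub_eq_zero.1 (polar_two (G := fun z w => ev Q z w
    - ev (MvPolynomial.map (starRingEnd ℂ) Q) w z) ?_ ?_ z w)
  · refine (ev_differentiable Q).sub ?_
    generalize hG : (fun p : (ℂ × ℂ) × (ℂ × ℂ) =>
      ev (MvPolynomial.map (starRingEnd ℂ) Q) p.1 p.2) = G
    have hGd : Differentiable ℂ G := hG ▸ ev_differentiable _
    have e : (fun p : (ℂ × ℂ) × (ℂ × ℂ) => ev (MvPolynomial.map (starRingEnd ℂ) Q) p.2 p.1)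
        = fun p => G (p.2, p.1) := by rw [← hG]
    rw [e]
    exact hGd.comp (differentiable_snd.prodMk differentiable_fst)
  · intro z
    have h := conj_ev Q z (cj z)
    rw [cj_cj, ← hQ, conj_ofReal] at h
    rw [← hQ, ← h, sub_self]

lemma ev_conjPart_line {Q : MvPolynomial (Fin 4) ℂ} {D : ℕ}
    (hs : ∀ m ∈ Q.support, (m 0 + m 2) + (m 1 + m 3) = D ∧ 0 < m 0 + m 2 ∧ 0 < m 1 + m 3)
    (z : ℂ × ℂ) (c : ℂ) : ev Q (c • z) (cj (c • z)) =
      ∑ b ∈ Finset.range D, ev (conjPart Q b) z (cj z) * (c ^ (D - b) * conj c ^ b) := by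
  conv_lhs => rw [sum_conjPart hs]
  rw [ev_sum]
  refine Finset.sum_congr rfl fun b _ => ?_
  rw [cj_smul, ev_smul_left (conjPart_wz hs b), ev_smul_right (conjPart_ww Q b)]
  ring

/-- The factorisation `P = U ∘ F`, with an explicit expansion of `U`. The coefficient `r 0` of the
holomorphic monomial vanishes because `P` has no pluriharmonic terms. The line through `z0` is one
on which `F` is the power map. -/
lemma exists_U {P : ℂ × ℂ → ℝ} {D : ℕ} {Q : MvPolynomial (Fin 4) ℂ}
    (hQ : ∀ z, (P z : ℂ) = ev Q z (cj z))
    (hs : ∀ m ∈ Q.support, (m 0 + m 2) + (m 1 + m 3) = D ∧ 0 < m 0 + m 2 ∧ 0 < m 1 + m 3)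
    (hpsh : ∀ z v, 0 ≤ lev P z v) (hB : PropertyB P) (hP : ∃ z, P z ≠ 0) :
    ∃ (d j : ℕ) (F : ℂ × ℂ → ℂ) (U : ℂ → ℝ) (r : ℕ → ℂ) (z0 : ℂ × ℂ), 0 < d ∧ IsPolyMap2 F ∧
      Differentiable ℂ F ∧ (∀ c z, F (c • z) = c ^ d * F z) ∧ F z0 = 1 ∧ r 0 = 0 ∧
      (∀ ξ, (U ξ : ℂ) = ∑ c ∈ Finset.range j, r c * (ξ ^ (j - c) * conj ξ ^ c)) ∧
      ∀ z, P z = U (F z) := by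
  obtain ⟨d, F, hd, hFp, hFd, hFh, ⟨z1, hz1⟩, hfac⟩ := exists_factor hQ hs hpsh hB hP
  -- the polarisation depends on `z` only through `F z`
  have hdep : ∀ z z' w, F z = F z' → ev Q z w = ev Q z' w := by
    intro z z' w hzz
    have : ∀ z, ev Q z w = ∑ b ∈ Finset.range D, ev (conjPart Q b) z w := by
      intro z
      conv_lhs => rw [sum_conjPart hs]
      rw [ev_sum]
    rw [this, this]
    refine Finset.sum_congr rfl fun b hb => ?_
    obtain ⟨s, c, -, hc⟩ := hfac b (Finset.mem_range.1 hb) w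
    rw [hc, hc, hzz]
  have hPdep : ∀ z z', F z = F z' → P z = P z' := by
    intro z z' h
    have e : (P z : ℂ) = P z' := by
      rw [hQ z, hdep z z' _ h, ev_hermitian hQ, cj_cj, hdep z z' _ h, ← hQ z', conj_ofReal]
    exact_mod_cast e
  obtain ⟨ν, hν⟩ := IsAlgClosed.exists_pow_nat_eq (F z1)⁻¹ hd
  set z0 := ν • z1 with hz0
  have hF0 : F z0 = 1 := by rw [hz0, hFh, hν, inv_mul_cancel₀ hz1]
  -- `U ξ` is defined as `P (μ z0)` for a chosen `d`-th root `μ` of `ξ`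
  choose μ hμ using fun ξ : ℂ => IsAlgClosed.exists_pow_nat_eq ξ hd
  have hPU : ∀ z, P z = P (μ (F z) • z0) := fun z => hPdep _ _ (by rw [hFh, hμ, hF0, mul_one])
  set t : ℕ → ℂ := fun b => ev (conjPart Q b) z0 (cj z0) with ht
  have ht0 : ∀ b < D, t b ≠ 0 → d ∣ D - b := by
    intro b hb hne
    obtain ⟨s, c, hc, hc'⟩ := hfac b hb (cj z0)
    rcases hc with rfl | h
    · exact absurd (by simp [ht, hc']) hne
    · exact ⟨s, h⟩
  have hline : ∀ c : ℂ, (P (c • z0) : ℂ)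
      = ∑ b ∈ Finset.range D, t b * (c ^ (D - b) * conj c ^ b) := by
    intro c; rw [hQ, ev_conjPart_line hs]
  -- invariance under a primitive `d`-th root of unity forces `d ∣ D`
  have hdD : d ∣ D := by
    obtain ⟨z, hz⟩ := hP
    rw [hPU z] at hz
    set c := μ (F z)
    set ω := Complex.exp (2 * Real.pi * I / d) with hω
    have hprim : IsPrimitiveRoot ω d := Complex.isPrimitiveRoot_exp d hd.ne'
    have hω1 : ω ^ d = 1 := hprim.pow_eq_one
    have hω0 : ω ≠ 0 := hprim.ne_zero hd.ne'
    have e1 : P ((ω * c) • z0) = P (c • z0) := hPdep _ _ (by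
      rw [hFh _ z0, hFh _ z0, mul_pow, hω1, one_mul])
    have e2 : (P ((ω * c) • z0) : ℂ) = conj ω ^ D * P (c • z0) := by
      rw [hline, hline, Finset.mul_sum]
      refine Finset.sum_congr rfl fun b hb => ?_
      have hb := Finset.mem_range.1 hb
      by_cases h0 : t b = 0
      · simp [h0]
      obtain ⟨s, hs⟩ := ht0 b hb h0
      have hp : ω ^ (D - b) = 1 := by rw [hs, pow_mul, hω1, one_pow]
      have hq : conj ω ^ b = conj ω ^ D := by
        have : D = (D - b) + b := by omega
        have h2 : conj ω ^ D = conj ω ^ (D - b) * conj ω ^ b := by rw [← pow_add, ← this]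
        rw [h2, ← map_pow conj ω (D - b), hp]
        simp
      rw [mul_pow, map_mul, mul_pow, hp, hq]
      ring
    rw [e1] at e2
    have hzc : (P (c • z0) : ℂ) ≠ 0 := by exact_mod_cast hz
    have e3 : conj ω ^ D = 1 := mul_right_cancel₀ hzc (by rw [one_mul]; exact e2.symm)
    have e4 : ω ^ D = 1 := by
      have := congrArg conj e3
      simpa using this
    exact (hprim.pow_eq_one_iff_dvd D).1 e4
  obtain ⟨j, rfl⟩ := hdD
  refine ⟨d, j, F, fun ξ => P (μ ξ • z0), fun c => t (d * c), z0, hd, hFp, hFd, hFh, hF0, ?_, ?_,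
    hPU⟩
  · simp [ht, conjPart_zero hs, ev]
  · intro ξ
    simp only
    rw [hline]
    have himg : ∑ c ∈ Finset.range j, t (d * c) * (ξ ^ (j - c) * conj ξ ^ c)
        = ∑ b ∈ (Finset.range j).image (fun c => d * c),
          t b * (μ ξ ^ (d * j - b) * conj (μ ξ) ^ b) := by
      rw [Finset.sum_image (fun a _ b _ h => Nat.eq_of_mul_eq_mul_left hd h)]
      refine Finset.sum_congr rfl fun c _ => ?_
      rw [← Nat.mul_sub, pow_mul, pow_mul, ← map_pow conj (μ ξ) d, hμ]
    rw [himg]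
    symm
    refine Finset.sum_subset ?_ ?_
    · intro b hb
      obtain ⟨c, hc, rfl⟩ := Finset.mem_image.1 hb
      exact Finset.mem_range.2 (Nat.mul_lt_mul_of_pos_left (Finset.mem_range.1 hc) hd)
    · intro b hb hb'
      have hb := Finset.mem_range.1 hb
      by_cases h0 : t b = 0
      · simp [h0]
      exfalso
      apply hb'
      have h1 : d ∣ b := by
        have := (Nat.dvd_sub_iff_right hb.le (Dvd.intro j rfl)).1 (ht0 b hb h0)
        exact this
      obtain ⟨c, rfl⟩ := h1
      exact Finset.mem_image.2 ⟨c, Finset.mem_range.2 (Nat.lt_of_mul_lt_mul_left hb), rfl⟩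

end

/-! ### The Laplacian of `U`, and rules for Laplacians -/

section

open MvPolynomial (pderiv C)

/-- The polynomial representing `U ∘ fst`. -/
def repU (r : ℕ → ℂ) (j : ℕ) : MvPolynomial (Fin 4) ℂ :=
  ∑ c ∈ Finset.range j, C (r c) * (MvPolynomial.X 0 ^ (j - c) * MvPolynomial.X 1 ^ c)

lemma repU_spec {U : ℂ → ℝ} {r : ℕ → ℂ} {j : ℕ}
    (hU : ∀ ξ, (U ξ : ℂ) = ∑ c ∈ Finset.range j, r c * (ξ ^ (j - c) * conj ξ ^ c)) (z : ℂ × ℂ) :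
    ((U z.1 : ℝ) : ℂ) = ev (repU r j) z (cj z) := by
  rw [hU]
  simp [repU, ev, cj]

lemma U_contDiff {U : ℂ → ℝ} {r : ℕ → ℂ} {j : ℕ}
    (hU : ∀ ξ, (U ξ : ℂ) = ∑ c ∈ Finset.range j, r c * (ξ ^ (j - c) * conj ξ ^ c))
    {n : WithTop ℕ∞} : ContDiff ℝ n U := by
  have h : ContDiff ℝ n (fun z : ℂ × ℂ => U z.1) := contDiff_of_ev (repU_spec hU)
  exact h.comp (contDiff_id.prodMk (contDiff_const (c := (0 : ℂ))))

lemma lev_U {U : ℂ → ℝ} {r : ℕ → ℂ} {j : ℕ}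
    (hU : ∀ ξ, (U ξ : ℂ) = ∑ c ∈ Finset.range j, r c * (ξ ^ (j - c) * conj ξ ^ c)) (ξ : ℂ) :
    ((lev U ξ 1 : ℝ) : ℂ) = 4 * ∑ c ∈ Finset.range j,
      r c * (((j - c : ℕ) : ℂ) * ξ ^ (j - c - 1) * (c * conj ξ ^ (c - 1))) := by
  have h1 := D2_add_D2_I (repU_spec hU) (ξ, 0) (1, 0) (1, 0)
  have h2 := lev_comp (f := U) (φ := fun z : ℂ × ℂ => z.1) (z := (ξ, 0))
    (U_contDiff hU).contDiffAt contDiff_fst.contDiffAt (1, 0)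
  rw [(hasFDerivAt_fst (𝕜 := ℂ) (p := ((ξ, 0) : ℂ × ℂ))).fderiv] at h2
  simp only [ContinuousLinearMap.coe_fst'] at h2
  rw [← h2, lev, h1]
  simp only [sesq, repU, ev, cj, map_sum, map_one, map_zero, mul_one, mul_zero, add_zero]
  rw [← two_mul, ← mul_assoc]
  norm_num
  refine Finset.sum_congr rfl fun c _ => ?_
  ring

/-- On the unit circle `ξ̄ = 1/ξ`, so `ΔU` times a power of `ξ` is a polynomial in `ξ`, nonzero as
soon as `U` has one mixed term. -/
lemma finite_zeros {U : ℂ → ℝ} {r : ℕ → ℂ} {j : ℕ}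
    (hU : ∀ ξ, (U ξ : ℂ) = ∑ c ∈ Finset.range j, r c * (ξ ^ (j - c) * conj ξ ^ c))
    {c0 : ℕ} (h0 : 0 < c0) (hj : c0 < j) (hr : r c0 ≠ 0) :
    {ξ : ℂ | ‖ξ‖ = 1 ∧ lev U ξ 1 = 0}.Finite := by
  set p : Polynomial ℂ := ∑ c ∈ Finset.range j,
    Polynomial.C (r c * ((j - c : ℕ) : ℂ) * c) * Polynomial.X ^ (2 * (j - c)) with hp
  have hp0 : p ≠ 0 := by
    intro h
    have := congrArg (fun q => Polynomial.coeff q (2 * (j - c0))) h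
    simp only [hp, Polynomial.finsetSum_coeff, Polynomial.coeff_C_mul, Polynomial.coeff_X_pow,
      Polynomial.coeff_zero] at this
    rw [Finset.sum_eq_single c0] at this
    · simp [hr] at this
      omega
    · intro c hc hne
      have := Finset.mem_range.1 hc
      rw [if_neg (by omega), mul_zero]
    · intro h; exact absurd (Finset.mem_range.2 hj) h
  refine (p.rootSet_finite ℂ).subset fun ξ hξ => ?_
  rw [Polynomial.mem_rootSet]
  refine ⟨hp0, ?_⟩
  obtain ⟨hn, hl⟩ := hξ
  have h1 := lev_U hU ξ
  rw [hl] at h1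
  have h2 : ∑ c ∈ Finset.range j,
      r c * (((j - c : ℕ) : ℂ) * ξ ^ (j - c - 1) * (c * conj ξ ^ (c - 1))) = 0 := by
    simpa using h1.symm
  have hcc : ξ * conj ξ = 1 := by rw [mul_conj, normSq_eq_norm_sq, hn]; simp
  simp only [hp, map_sum, Polynomial.aeval_def, Polynomial.eval₂_eq_eval_map]
  have h3 := congrArg (fun x => ξ ^ j * x) h2
  simp only [Finset.mul_sum, mul_zero] at h3
  rw [← h3]
  refine Finset.sum_congr rfl fun c hc => ?_
  have hc := Finset.mem_range.1 hc
  rcases Nat.eq_zero_or_pos c with rfl | hc0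
  · simp
  have e : ξ ^ j * ξ ^ (j - c - 1) * conj ξ ^ (c - 1) = ξ ^ (2 * (j - c)) := by
    have : j + (j - c - 1) = 2 * (j - c) + (c - 1) := by omega
    rw [← pow_add, this, pow_add, mul_assoc, ← mul_pow, hcc]
    simp
  simp
  rw [← e]
  ring

lemma continuous_lev {u : ℂ → ℝ} (hu : ContDiff ℝ 2 u) : Continuous fun ξ => lev u ξ 1 := by
  have h : ContDiff ℝ 0 (fderiv ℝ (fderiv ℝ u)) :=
    (hu.fderiv_right (m := 1) (by norm_num)).fderiv_right (m := 0) (by norm_num)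
  have h' := h.continuous
  unfold lev D2
  fun_prop

lemma nonneg_of_ne_zero {u : ℂ → ℝ} (hu : Continuous u) (h : ∀ ξ, ξ ≠ 0 → 0 ≤ u ξ) (ξ : ℂ) :
    0 ≤ u ξ := by
  have hc : IsClosed {ξ | 0 ≤ u ξ} := isClosed_le continuous_const hu
  have hd : Dense ({0}ᶜ : Set ℂ) := dense_compl_singleton 0
  have hs : ({0}ᶜ : Set ℂ) ⊆ {ξ | 0 ≤ u ξ} := fun ξ hξ => h ξ hξ
  exact hc.closure_subset_iff.2 hs (hd ξ)

lemma lev_add {f g : ℂ → ℝ} {z : ℂ} (hf : ContDiff ℝ 2 f) (hg : ContDiff ℝ 2 g) (v : ℂ) :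
    lev (fun x => f x + g x) z v = lev f z v + lev g z v := by
  have df := hf.differentiable (by norm_num)
  have dg := hg.differentiable (by norm_num)
  have df' := (hf.fderiv_right (m := 1) (by norm_num)).differentiable (by norm_num)
  have dg' := (hg.fderiv_right (m := 1) (by norm_num)).differentiable (by norm_num)
  have e : fderiv ℝ (fun x => f x + g x) = fun x => fderiv ℝ f x + fderiv ℝ g x := by
    funext x; exact fderiv_fun_add (df x) (dg x)
  simp only [lev, D2, e]
  rw [fderiv_fun_add (df' z) (dg' z)]
  simp
  ring

lemma lev_const_mul {f : ℂ → ℝ} {z : ℂ} (hf : ContDiff ℝ 2 f) (c : ℝ) (v : ℂ) :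
    lev (fun x => c * f x) z v = c * lev f z v := by
  have df := hf.differentiable (by norm_num)
  have df' := (hf.fderiv_right (m := 1) (by norm_num)).differentiable (by norm_num)
  have e : fderiv ℝ (fun x => c * f x) = fun x => c • fderiv ℝ f x := by
    funext x; exact fderiv_const_mul (df x) c
  simp only [lev, D2, e]
  rw [fderiv_fun_const_smul (df' z)]
  simp
  ring

lemma lev_mul {f g : ℂ → ℝ} {z : ℂ} (hf : ContDiff ℝ 2 f) (hg : ContDiff ℝ 2 g) (v : ℂ) :
    lev (fun x => f x * g x) z v = f z * lev g z v + g z * lev f z v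
      + 2 * (fderiv ℝ f z v * fderiv ℝ g z v + fderiv ℝ f z (I • v) * fderiv ℝ g z (I • v)) := by
  have df := hf.differentiable (by norm_num)
  have dg := hg.differentiable (by norm_num)
  have df' := (hf.fderiv_right (m := 1) (by norm_num)).differentiable (by norm_num)
  have dg' := (hg.fderiv_right (m := 1) (by norm_num)).differentiable (by norm_num)
  have e : fderiv ℝ (fun x => f x * g x) = fun x => f x • fderiv ℝ g x + g x • fderiv ℝ f x := by
    funext x; exact fderiv_fun_mul (df x) (dg x)
  simp only [lev, D2, e]
  rw [fderiv_fun_add ((df z).fun_smul (dg' z)) ((dg z).fun_smul (df' z)),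
    fderiv_fun_smul (df z) (dg' z), fderiv_fun_smul (dg z) (df' z)]
  simp
  ring

/-- At a zero which is a minimum of `f`, the first-order terms of the product rule vanish. -/
lemma lev_mul_of_min {f g : ℂ → ℝ} {z : ℂ} (hf : ContDiff ℝ 2 f) (hg : ContDiff ℝ 2 g)
    (hpos : ∀ x, 0 ≤ f x) (h0 : f z = 0) (v : ℂ) :
    lev (fun x => f x * g x) z v = g z * lev f z v := by
  have hm : IsLocalMin f z := Filter.Eventually.of_forall fun x => by rw [h0]; exact hpos x
  rw [lev_mul hf hg, hm.fderiv_eq_zero, h0]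
  simp

/-- Scaling law for the Laplacian of a homogeneous function. -/
lemma lev_homog {u : ℂ → ℝ} (hu : ContDiff ℝ 2 u) {n : ℕ} {t : ℝ}
    (h : ∀ w : ℂ, u ((t : ℂ) * w) = t ^ n * u w) (w : ℂ) :
    t ^ 2 * lev u (t * w) 1 = t ^ n * lev u w 1 := by
  have h1 := lev_comp (f := u) (φ := fun w : ℂ => (t : ℂ) * w) (z := w) hu.contDiffAt
    (by fun_prop) 1
  rw [funext h, lev_const_mul hu] at h1
  rw [h1]
  have : fderiv ℂ (fun w : ℂ => (t : ℂ) * w) w 1 = (t : ℂ) • (1 : ℂ) := by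
    simp
  rw [this, lev_smul]
  simp

lemma U_homog {U : ℂ → ℝ} {r : ℕ → ℂ} {j : ℕ}
    (hU : ∀ ξ, (U ξ : ℂ) = ∑ c ∈ Finset.range j, r c * (ξ ^ (j - c) * conj ξ ^ c)) (t : ℝ) (w : ℂ) :
    U ((t : ℂ) * w) = t ^ j * U w := by
  have : ((U ((t : ℂ) * w) : ℝ) : ℂ) = ((t ^ j * U w : ℝ) : ℂ) := by
    push_cast
    rw [hU, hU, Finset.mul_sum]
    refine Finset.sum_congr rfl fun c hc => ?_
    have hc := Finset.mem_range.1 hc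
    have : (t : ℂ) ^ j = t ^ (j - c) * t ^ c := by rw [← pow_add]; congr 1; omega
    rw [this, map_mul, conj_ofReal, mul_pow, mul_pow]
    ring
  exact_mod_cast this

end

/-! ### Functions with prescribed sign of the Laplacian -/

lemma two_le_smooth : (2 : WithTop ℕ∞) ≤ ((⊤ : ℕ∞) : WithTop ℕ∞) := by
  have : ((2 : ℕ∞) : WithTop ℕ∞) ≤ ((⊤ : ℕ∞) : WithTop ℕ∞) := WithTop.coe_le_coe.2 le_top
  exact this

lemma contDiff_normSq {n : WithTop ℕ∞} : ContDiff ℝ n (fun w : ℂ => normSq w) := by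
  have : (fun w : ℂ => normSq w) = fun w => ‖w‖ ^ 2 := by ext w; exact normSq_eq_norm_sq w
  rw [this]
  exact contDiff_norm_sq ℝ

/-- The quadratic form `|w|² - Re (w² s̄)`; for `|s| = 1` it is nonnegative, vanishes exactly on the
real line of square roots of `s`, and has Laplacian `4`. -/
def gs (s w : ℂ) : ℝ := normSq w + -1 * (w ^ 2 * conj s).re

lemma gs_contDiff (s : ℂ) {n : WithTop ℕ∞} : ContDiff ℝ n (gs s) := by
  have c2 : ContDiff ℝ n (fun w : ℂ => (w ^ 2 * conj s).re) :=
    Complex.reCLM.contDiff.comp ((contDiff_id.pow 2).mul contDiff_const)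
  exact contDiff_normSq.add (contDiff_const.mul c2)

lemma lev_gs (s w : ℂ) : lev (gs s) w 1 = 4 := by
  have c2 : ContDiff ℝ 2 (fun w : ℂ => (w ^ 2 * conj s).re) :=
    Complex.reCLM.contDiff.comp ((contDiff_id.pow 2).mul contDiff_const)
  have h1 : lev (fun w : ℂ => normSq w) w 1 = 4 := by
    have := lev_U (U := fun w => normSq w) (r := fun c => if c = 1 then 1 else 0) (j := 2)
      (fun ξ => by simp [mul_conj]) w
    simp at this
    exact_mod_cast this
  have hre : ∀ z v : ℂ, lev (fun x : ℂ => x.re) z v = 0 := by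
    intro z v
    have : fderiv ℝ (fun x : ℂ => x.re) = fun _ => Complex.reCLM := by
      funext x; exact Complex.reCLM.hasFDerivAt.fderiv
    simp [lev, D2, this]
  have h2 : lev (fun w : ℂ => (w ^ 2 * conj s).re) w 1 = 0 := by
    rw [lev_comp (f := fun x : ℂ => x.re) (φ := fun w : ℂ => w ^ 2 * conj s)
      (Complex.reCLM.contDiff.contDiffAt) (by fun_prop), hre]
  unfold gs
  rw [lev_add contDiff_normSq (contDiff_const.mul c2), lev_const_mul c2, h1, h2]
  norm_num

lemma gs_nonneg {s : ℂ} (hs : ‖s‖ = 1) (w : ℂ) : 0 ≤ gs s w := by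
  have h := Complex.re_le_norm (w ^ 2 * conj s)
  rw [norm_mul, norm_pow, RCLike.norm_conj, hs, mul_one] at h
  rw [gs, normSq_eq_norm_sq]
  linarith

lemma gs_eq_zero {w : ℂ} (hw : ‖w‖ = 1) : gs (w ^ 2) w = 0 := by
  rw [gs, mul_conj, ofReal_re, normSq_eq_norm_sq, normSq_eq_norm_sq, norm_pow, hw]
  norm_num

lemma gs_pos {s w : ℂ} (hs : ‖s‖ = 1) (hw : ‖w‖ = 1) (h : s ≠ w ^ 2) : 0 < gs s w := by
  refine lt_of_le_of_ne (gs_nonneg hs w) fun h0 => h ?_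
  have hre : (w ^ 2 * conj s).re = 1 := by
    rw [gs, normSq_eq_norm_sq, hw] at h0; linarith
  have hn : normSq (w ^ 2 * conj s) = 1 := by
    rw [normSq_eq_norm_sq, norm_mul, norm_pow, RCLike.norm_conj, hs, hw]; norm_num
  have him : (w ^ 2 * conj s).im = 0 := by
    rw [normSq_apply, hre] at hn
    have : (w ^ 2 * conj s).im * (w ^ 2 * conj s).im = 0 := by linarith
    simpa using this
  have h1 : w ^ 2 * conj s = 1 := Complex.ext hre him
  have h2 : conj s * s = 1 := by rw [mul_comm, mul_conj, normSq_eq_norm_sq, hs]; norm_num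
  linear_combination w ^ 2 * h2 - s * h1

lemma gs_homog (s : ℂ) (t : ℝ) (w : ℂ) : gs s (t * w) = t ^ 2 * gs s w := by
  unfold gs
  have : ((t : ℂ) * w) ^ 2 * conj s = ((t ^ 2 : ℝ) : ℂ) * (w ^ 2 * conj s) := by push_cast; ring
  rw [this, re_ofReal_mul, map_mul, normSq_ofReal]
  ring

/-- Given finitely many unit vectors, there is a nonnegative homogeneous polynomial vanishing on
them with positive Laplacian there. -/
lemma exists_g (j : ℕ) {Z : Set ℂ} (hZ : Z.Finite) (hZ1 : ∀ ζ ∈ Z, ‖ζ‖ = 1) :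
    ∃ (ρ : ℕ) (g : ℂ → ℝ), j ≤ ρ ∧ ContDiff ℝ (⊤ : ℕ∞) g ∧ (∀ w, 0 ≤ g w) ∧
      (∀ (t : ℝ) (w : ℂ), g (t * w) = t ^ (2 * ρ) * g w) ∧
      ∀ ζ ∈ Z, g ζ = 0 ∧ 0 < lev g ζ 1 := by
  classical
  set S : Finset ℂ := hZ.toFinset.image (fun ζ => ζ ^ 2) with hS
  have hS1 : ∀ s ∈ S, ‖s‖ = 1 := by
    intro s hs
    obtain ⟨ζ, hζ, rfl⟩ := Finset.mem_image.1 hs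
    rw [norm_pow, hZ1 ζ (hZ.mem_toFinset.1 hζ), one_pow]
  refine ⟨j + S.card, fun w => normSq w ^ j * ∏ s ∈ S, gs s w, by omega, ?_, ?_, ?_, ?_⟩
  · exact (contDiff_normSq.pow j).mul (contDiff_prod fun s _ => gs_contDiff s)
  · exact fun w => mul_nonneg (pow_nonneg (normSq_nonneg w) _)
      (Finset.prod_nonneg fun s hs => gs_nonneg (hS1 s hs) w)
  · intro t w
    simp only [gs_homog, Finset.prod_mul_distrib, Finset.prod_const, map_mul, normSq_ofReal]
    ring
  · intro ζ hζ
    have hmem : ζ ^ 2 ∈ S := Finset.mem_image.2 ⟨ζ, hZ.mem_toFinset.2 hζ, rfl⟩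
    have h1 := hZ1 ζ hζ
    have e : (fun w => normSq w ^ j * ∏ s ∈ S, gs s w) = fun w => gs (ζ ^ 2) w *
        (normSq w ^ j * ∏ s ∈ S.erase (ζ ^ 2), gs s w) := by
      funext w
      rw [← Finset.mul_prod_erase S _ hmem]
      ring
    refine ⟨?_, ?_⟩
    · rw [e]
      simp only [gs_eq_zero h1, zero_mul]
    · rw [e, lev_mul_of_min (gs_contDiff _) ((contDiff_normSq.pow j).mul
        (contDiff_prod fun s _ => gs_contDiff s)) (gs_nonneg (hS1 _ hmem)) (gs_eq_zero h1), lev_gs]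
      refine mul_pos (mul_pos (pow_pos (normSq_pos.2 ?_) _) (Finset.prod_pos fun s hs => ?_))
        (by norm_num)
      · rintro rfl; simp at h1
      · exact gs_pos (hS1 s (Finset.mem_of_mem_erase hs)) h1 (Finset.ne_of_mem_erase hs)

/-- A smooth homogeneous function, positive off the origin, whose Laplacian is negative on a given
finite set of unit vectors. -/
lemma exists_h (j : ℕ) {Z : Set ℂ} (hZ : Z.Finite) (hZ1 : ∀ ζ ∈ Z, ‖ζ‖ = 1) :
    ∃ (ρ : ℕ) (h : ℂ → ℝ) (ε : ℝ), j ≤ ρ ∧ 0 < ε ∧ ContDiff ℝ (⊤ : ℕ∞) h ∧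
      (∀ w, ε * ‖w‖ ^ (4 * ρ) ≤ h w) ∧ (0 < ρ → h 0 = 0) ∧
      (∀ (t : ℝ) (w : ℂ), h (t * w) = t ^ (4 * ρ) * h w) ∧ ∀ ζ ∈ Z, lev h ζ 1 < 0 := by
  obtain ⟨ρ, g, hρ, hg, hg0, hgh, hgZ⟩ := exists_g j hZ hZ1
  set n : ℂ → ℝ := fun w => normSq w ^ ρ with hn
  have hnc : ∀ {k : WithTop ℕ∞}, ContDiff ℝ k n := contDiff_normSq.pow ρ
  have hg2 : ContDiff ℝ 2 g := hg.of_le two_le_smooth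
  have hnh : ∀ (t : ℝ) (w : ℂ), n (t * w) = t ^ (2 * ρ) * n w := by
    intro t w
    simp only [hn, map_mul, normSq_ofReal]
    ring
  obtain ⟨ε, hεZ, hε⟩ : ∃ ε : ℝ, (∀ ζ ∈ Z, ε * lev (fun w => n w * n w) ζ 1 < lev g ζ 1) ∧ 0 < ε := by
    have h1 : ∀ᶠ ε in nhdsWithin (0 : ℝ) (Set.Ioi 0),
        ∀ ζ ∈ Z, ε * lev (fun w => n w * n w) ζ 1 < lev g ζ 1 := by
      rw [Filter.eventually_all_finite hZ]
      intro ζ hζ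
      have hc : Continuous fun ε : ℝ => ε * lev (fun w => n w * n w) ζ 1 := by fun_prop
      refine nhdsWithin_le_nhds (hc.continuousAt.eventually_lt continuousAt_const ?_)
      simpa using (hgZ ζ hζ).2
    exact (h1.and self_mem_nhdsWithin).exists
  -- the witness is `(ε n - g)² + ε² n²`, expanded; the cross term `-2 ε g n` makes its
  -- Laplacian negative where `g = 0`
  refine ⟨ρ, fun w => 2 * ε ^ 2 * (n w * n w) + (-2 * ε * (g w * n w) + g w * g w), ε ^ 2, hρ,
    by positivity, ?_, ?_, ?_, ?_, ?_⟩
  · exact (contDiff_const.mul (hnc.mul hnc)).add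
      ((contDiff_const.mul (hg.mul hnc)).add (hg.mul hg))
  · intro w
    have : ‖w‖ ^ (4 * ρ) = n w * n w := by
      simp only [hn, normSq_eq_norm_sq]; ring
    rw [this]
    nlinarith [sq_nonneg (ε * n w - g w)]
  · intro hpos
    have e1 : n 0 = 0 := by simp [hn, hpos.ne']
    have e2 : g 0 = 0 := by
      have := hgh 0 0
      rw [zero_pow (by omega)] at this
      simpa using this
    simp [e1, e2]
  · intro t w
    simp only [hgh, hnh]
    ring
  · intro ζ hζ
    obtain ⟨z0, zp⟩ := hgZ ζ hζ
    have hn2 : ContDiff ℝ 2 n := hnc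
    have hn1 : n ζ = 1 := by simp [hn, normSq_eq_norm_sq, hZ1 ζ hζ]
    rw [lev_add (contDiff_const.mul (hn2.mul hn2))
        ((contDiff_const.mul (hg2.mul hn2)).add (hg2.mul hg2)),
      lev_add (contDiff_const.mul (hg2.mul hn2)) (hg2.mul hg2),
      lev_const_mul (hn2.mul hn2), lev_const_mul (hg2.mul hn2),
      lev_mul_of_min hg2 hn2 hg0 z0, lev_mul_of_min hg2 hg2 hg0 z0, hn1, z0]
    have := hεZ ζ hζ
    nlinarith

/-- Domination on the unit circle, by compactness of the part of it where `a ≥ 0`. -/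
lemma exists_compact_bound {a q : ℂ → ℝ} (ha : Continuous a) (hq : Continuous q)
    (hq0 : ∀ ξ, 0 ≤ q ξ) (h : ∀ ξ, ‖ξ‖ = 1 → q ξ = 0 → a ξ < 0) :
    ∃ C : ℝ, 0 < C ∧ ∀ ξ, ‖ξ‖ = 1 → a ξ ≤ C * q ξ := by
  set K : Set ℂ := Metric.sphere 0 1 ∩ {ξ | 0 ≤ a ξ} with hK
  have hKc : IsCompact K := (isCompact_sphere 0 1).inter_right (isClosed_le continuous_const ha)
  have hpos : ∀ ξ ∈ K, 0 < q ξ := by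
    intro ξ hξ
    refine lt_of_le_of_ne (hq0 ξ) fun h0 => ?_
    exact absurd hξ.2 (not_le.2 (h ξ (by simpa using hξ.1) h0.symm))
  obtain ⟨M, hM⟩ := hKc.bddAbove_image (f := fun ξ => a ξ / q ξ)
    (ha.continuousOn.div hq.continuousOn fun ξ hξ => (hpos ξ hξ).ne')
  refine ⟨max M 1, by positivity, fun ξ hξ => ?_⟩
  by_cases h0 : 0 ≤ a ξ
  · have hm : ξ ∈ K := ⟨by simpa using hξ, h0⟩
    have := hM (Set.mem_image_of_mem _ hm)
    rw [div_le_iff₀ (hpos ξ hm)] at this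
    exact this.trans (mul_le_mul_of_nonneg_right (le_max_left _ _) (hq0 ξ))
  · exact (not_le.1 h0).le.trans (mul_nonneg (by positivity) (hq0 ξ))

/-- For the concave function `ψ(t) = t/(1+t)` one has `Δ(ψ ∘ h) ≤ Δh / (1 + h)²`. -/
lemma lev_bounded {h : ℂ → ℝ} (hh : ContDiff ℝ (⊤ : ℕ∞) h) (h0 : ∀ w, 0 ≤ h w) :
    ContDiff ℝ (⊤ : ℕ∞) (fun w => h w / (1 + h w)) ∧
    ∀ w, lev (fun w => h w / (1 + h w)) w 1 ≤ lev h w 1 / (1 + h w) ^ 2 := by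
  have hne : ∀ w, 1 + h w ≠ 0 := fun w => by have := h0 w; positivity
  have hk : ContDiff ℝ (⊤ : ℕ∞) (fun w => h w / (1 + h w)) :=
    hh.div (contDiff_const.add hh) hne
  refine ⟨hk, fun w => ?_⟩
  have hh2 : ContDiff ℝ 2 h := hh.of_le two_le_smooth
  set k := fun w => h w / (1 + h w) with hkd
  have hk2 : ContDiff ℝ 2 k := hk.of_le two_le_smooth
  -- differentiate the identity `h = k + k h` once and twice
  have e : h = fun w => k w + k w * h w := by
    funext x
    have := hne x
    simp only [hkd]
    field_simp
  have l1 : lev h w 1 = lev k w 1 + (k w * lev h w 1 + h w * lev k w 1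
      + 2 * (fderiv ℝ k w 1 * fderiv ℝ h w 1 + fderiv ℝ k w (I • 1) * fderiv ℝ h w (I • 1))) := by
    conv_lhs => rw [e]
    rw [lev_add hk2 (hk2.mul hh2), lev_mul hk2 hh2]
  have dh := hh2.differentiable (by norm_num) w
  have dk := hk2.differentiable (by norm_num) w
  have l2 : ∀ v, fderiv ℝ h w v = fderiv ℝ k w v + (k w * fderiv ℝ h w v + h w * fderiv ℝ k w v) := by
    intro v
    conv_lhs => rw [e]
    rw [fderiv_fun_add dk (dk.fun_mul dh), fderiv_fun_mul dk dh]
    simp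
  have hp : 0 < 1 + h w := by have := h0 w; positivity
  have hkw : k w = h w / (1 + h w) := rfl
  have l3 : ∀ v, fderiv ℝ h w v = (1 + h w) ^ 2 * fderiv ℝ k w v := by
    intro v
    have := l2 v
    rw [hkw] at this
    field_simp at this
    linear_combination this
  rw [le_div_iff₀ (by positivity)]
  rw [hkw, l3, l3] at l1
  field_simp at l1
  have : 0 ≤ (1 + h w) ^ 3 * (fderiv ℝ k w 1 ^ 2 + fderiv ℝ k w (I • 1) ^ 2) := by positivity
  nlinarith

/-! ### The bump, and the conclusion -/

lemma polyMap_contDiff {F : ℂ × ℂ → ℂ} (hF : IsPolyMap2 F) {n : WithTop ℕ∞} :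
    ContDiff ℂ n F := by
  obtain ⟨Q, hQ⟩ := hF
  rw [funext hQ]
  clear hQ
  induction Q using MvPolynomial.induction_on with
  | C a => simpa using contDiff_const
  | add p q hp hq => simpa using hp.add hq
  | mul_X p i hp =>
    simp only [map_mul, MvPolynomial.eval_X]
    refine hp.mul ?_
    fin_cases i
    · exact contDiff_fst
    · exact contDiff_snd

/-- The one-variable bump: a smooth nonnegative function vanishing only at the origin whose
Laplacian is dominated by that of `U`. -/
lemma exists_bump {U : ℂ → ℝ} {j : ℕ} (hj : 0 < j) (hU2 : ContDiff ℝ 2 U)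
    (hq0 : ∀ ξ, 0 ≤ lev U ξ 1) (hhom : ∀ (t : ℝ) (w : ℂ), U (t * w) = t ^ j * U w)
    (hZ : {ξ : ℂ | ‖ξ‖ = 1 ∧ lev U ξ 1 = 0}.Finite) :
    ∃ k : ℂ → ℝ, ContDiff ℝ (⊤ : ℕ∞) k ∧ (∀ w, 0 ≤ k w) ∧ (∀ w, k w = 0 ↔ w = 0) ∧
      ∀ w, lev k w 1 ≤ lev U w 1 := by
  obtain ⟨ρ, h, ε, hρ, hε, hh, hlow, h00, hhh, hneg⟩ := exists_h j hZ (fun ζ hζ => hζ.1)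
  have hh2 : ContDiff ℝ 2 h := hh.of_le two_le_smooth
  obtain ⟨C, hC, hCb⟩ := exists_compact_bound (continuous_lev hh2) (continuous_lev hU2) hq0
    (fun ξ h1 h2 => hneg ξ ⟨h1, h2⟩)
  have hnn : ∀ w, 0 ≤ h w := fun w => le_trans (by positivity) (hlow w)
  obtain ⟨hs, hb⟩ := lev_bounded hh hnn
  have hs2 := hs.of_le two_le_smooth
  set C' := C * (1 + 1 / ε) with hC'
  have hC'0 : 0 < C' := by positivity
  have key : ∀ w, w ≠ 0 → lev (fun w => h w / (1 + h w)) w 1 ≤ C' * lev U w 1 := by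
    intro w hw
    set t := ‖w‖ with ht
    have ht0 : 0 < t := norm_pos_iff.2 hw
    have ht0' : (t : ℂ) ≠ 0 := by exact_mod_cast ht0.ne'
    set v := w / t with hv
    have hwv : w = t * v := by rw [hv]; field_simp
    have hv1 : ‖v‖ = 1 := by rw [hv, norm_div, norm_real, ht, norm_norm, div_self ht0.ne']
    have e1 := lev_homog hh2 (hhh t) v
    have e2 := lev_homog hU2 (hhom t) v
    rw [← hwv] at e1 e2
    have e3 : lev h w 1 ≤ C * t ^ (4 * ρ - j) * lev U w 1 := by
      have h1 : t ^ 2 * lev h w 1 ≤ t ^ 2 * (C * t ^ (4 * ρ - j) * lev U w 1) := by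
        calc t ^ 2 * lev h w 1 = t ^ (4 * ρ) * lev h v 1 := e1
          _ ≤ t ^ (4 * ρ) * (C * lev U v 1) :=
            mul_le_mul_of_nonneg_left (hCb v hv1) (by positivity)
          _ = C * t ^ (4 * ρ - j) * (t ^ j * lev U v 1) := by
            have : t ^ (4 * ρ) = t ^ (4 * ρ - j) * t ^ j := by
              rw [← pow_add]; congr 1; omega
            rw [this]; ring
          _ = _ := by rw [← e2]; ring
      exact le_of_mul_le_mul_left h1 (by positivity)
    have e4 : t ^ (4 * ρ - j) ≤ (1 + 1 / ε) * (1 + h w) ^ 2 := by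
      have hp := hnn w
      have hε' : 0 < 1 / ε := by positivity
      rcases le_total t 1 with h1 | h1
      · have : t ^ (4 * ρ - j) ≤ 1 := pow_le_one₀ ht0.le h1
        nlinarith [mul_nonneg hε'.le (sq_nonneg (1 + h w))]
      · have h2 : t ^ (4 * ρ - j) ≤ t ^ (4 * ρ) := pow_le_pow_right₀ h1 (by omega)
        have h3 : t ^ (4 * ρ) ≤ 1 / ε * h w := by
          rw [one_div, ← div_eq_inv_mul, le_div_iff₀ hε, mul_comm]; exact hlow w
        nlinarith [mul_nonneg hε'.le (sq_nonneg (1 + h w)), mul_nonneg hε'.le hp,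
          mul_nonneg hε'.le (mul_nonneg hp hp)]
    refine (hb w).trans ?_
    have hp : 0 < (1 + h w) ^ 2 := by have := hnn w; positivity
    rw [div_le_iff₀ hp]
    calc lev h w 1 ≤ C * t ^ (4 * ρ - j) * lev U w 1 := e3
      _ ≤ C * ((1 + 1 / ε) * (1 + h w) ^ 2) * lev U w 1 := by
        have := hq0 w
        gcongr
      _ = _ := by rw [hC']; ring
  refine ⟨fun w => 1 / C' * (h w / (1 + h w)), contDiff_const.mul hs, ?_, ?_, ?_⟩
  · intro w
    have := hnn w
    positivity
  · intro w
    have hp := hnn w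
    constructor
    · intro h0
      by_contra hw
      have : 0 < h w := lt_of_lt_of_le (by have := norm_pos_iff.2 hw; positivity) (hlow w)
      have : 0 < 1 / C' * (h w / (1 + h w)) := by positivity
      exact this.ne' h0
    · rintro rfl
      simp [h00 (by omega)]
  · intro w
    rw [lev_const_mul hs2]
    have := nonneg_of_ne_zero (u := fun w => C' * lev U w 1 - lev (fun w => h w / (1 + h w)) w 1)
      ((continuous_const.mul (continuous_lev hU2)).sub (continuous_lev hs2))
      (fun w hw => sub_nonneg.2 (key w hw)) w
    rw [one_div, ← div_eq_inv_mul, div_le_iff₀ hC'0]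
    linarith

/-- Subharmonicity of `U` away from the origin is read off from that of `U ∘ F` along a line on
which `F` is a power map, and extends to the origin by continuity. -/
lemma U_subharmonic {P : ℂ × ℂ → ℝ} (hP : ContDiff ℝ 2 P) (hpsh : ∀ z v, 0 ≤ lev P z v)
    {d : ℕ} (hd : 0 < d) {F : ℂ × ℂ → ℂ} (hFh : ∀ c z, F (c • z) = c ^ d * F z) {z0 : ℂ × ℂ}
    (hF0 : F z0 = 1) {U : ℂ → ℝ} (hU : ContDiff ℝ 2 U) (hPU : ∀ z, P z = U (F z)) (ξ : ℂ) :
    0 ≤ lev U ξ 1 := by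
  refine nonneg_of_ne_zero (continuous_lev hU) (fun ξ hξ => ?_) ξ
  obtain ⟨μ, rfl⟩ := IsAlgClosed.exists_pow_nat_eq ξ hd
  have hμ : μ ≠ 0 := by rintro rfl; exact hξ (zero_pow hd.ne')
  have e1 := lev_comp (f := P) (φ := fun c : ℂ => c • z0) (z := μ) hP.contDiffAt (by fun_prop) 1
  have e2 := lev_comp (f := U) (φ := fun c : ℂ => c ^ d) (z := μ) hU.contDiffAt (by fun_prop) 1
  have e3 : (fun c : ℂ => P (c • z0)) = fun c => U (c ^ d) := by
    funext c; rw [hPU, hFh, hF0, mul_one]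
  rw [e3, e2] at e1
  have e4 : fderiv ℂ (fun c : ℂ => c ^ d) μ 1 = (d * μ ^ (d - 1)) • (1 : ℂ) := by
    simp
  rw [e4, lev_smul] at e1
  have h := hpsh (μ • z0) (fderiv ℂ (fun c : ℂ => c • z0) μ 1)
  rw [← e1] at h
  have hpos : 0 < ‖(d : ℂ) * μ ^ (d - 1)‖ ^ 2 := by
    have : (d : ℂ) * μ ^ (d - 1) ≠ 0 := mul_ne_zero (by exact_mod_cast hd.ne') (pow_ne_zero _ hμ)
    have := norm_pos_iff.2 this
    positivity
  exact nonneg_of_mul_nonneg_right h hpos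

/-- Theorem 2.3: a homogeneous plurisubharmonic polynomial with
Property (B) factors as `U ∘ F` with `U` subharmonic and `F` holomorphic
homogeneous, and can be bumped off `F⁻¹{0}`. -/
theorem homobumpB (k : ℕ) (hk : 1 ≤ k) (P : ℂ × ℂ → ℝ)
    (hpoly : IsRealPoly2 P) (hpsh : IsPsh P) (hnph : ¬ IsPluriharmonic P)
    (hnt : NoPluriharmonicTerms P) (hhom : HomogeneousDeg P (2 * k))
    (hB : PropertyB P) :
    ∃ (U : ℂ → ℝ) (F : ℂ × ℂ → ℂ) (j d : ℕ),
      IsRealPoly1 U ∧ Subharmonic U ∧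
      (∀ t : ℝ, 0 < t → ∀ w : ℂ, U ((t : ℂ) * w) = t ^ j * U w) ∧
      IsPolyMap2 F ∧ (∀ t : ℝ, 0 < t → ∀ z : ℂ × ℂ, F (t • z) = (t : ℂ) ^ d * F z) ∧
      (∀ z, P z = U (F z)) ∧
      ∃ H : ℂ × ℂ → ℝ, ContDiff ℝ (⊤ : ℕ∞) H ∧ (∀ z, 0 ≤ H z) ∧
        (∀ z : ℂ × ℂ, H z = 0 ↔ F z = 0) ∧
        ∀ δ : ℝ, 0 < δ → δ ≤ 1 → IsPsh fun z => P z - δ * H z := by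
  obtain ⟨Q, hQ, hs⟩ := exists_homog_rep hnt hhom
  have hPc : ContDiff ℝ 2 P := contDiff_of_ev hQ
  have hlev : ∀ z v, 0 ≤ lev P z v := fun z v => by
    rw [← leviForm_re_eq hPc.contDiffAt]
    exact mul_nonneg (by norm_num) (hpsh z v)
  have hne : ∃ z, P z ≠ 0 := by
    by_contra hcon
    push Not at hcon
    exact hnph ⟨fun _ => 0, differentiable_const _, fun z => by simp [hcon z]⟩
  obtain ⟨d, j, F, U, r, z0, hd, hFp, hFd, hFh, hF0, hr0, hU, hPU⟩ := exists_U hQ hs hlev hB hne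
  have hUc : ContDiff ℝ 2 U := U_contDiff hU
  have hUsub := U_subharmonic hPc hlev hd hFh hF0 hUc hPU
  obtain ⟨c0, hc0j, hc0⟩ : ∃ c0 < j, r c0 ≠ 0 := by
    by_contra hcon
    push Not at hcon
    obtain ⟨z, hz⟩ := hne
    apply hz
    have : (U (F z) : ℂ) = 0 := by
      rw [hU]
      exact Finset.sum_eq_zero fun c hc => by rw [hcon c (Finset.mem_range.1 hc), zero_mul]
    rw [hPU]
    exact_mod_cast this
  have hc0p : 0 < c0 := Nat.pos_of_ne_zero fun h => hc0 (h ▸ hr0)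
  obtain ⟨κ, hκ, hκ0, hκz, hκl⟩ := exists_bump (by omega) hUc hUsub (U_homog hU)
    (finite_zeros hU hc0p hc0j hc0)
  have hF2 : ContDiff ℂ 2 F := polyMap_contDiff hFp
  have hFs : ContDiff ℝ (⊤ : ℕ∞) F := (polyMap_contDiff hFp).restrict_scalars ℝ
  refine ⟨U, F, j, d, ?_, ?_, fun t _ w => U_homog hU t w, hFp, ?_, hPU,
    fun z => κ (F z), hκ.comp hFs, fun z => hκ0 _, fun z => hκz _, ?_⟩
  · refine ⟨∑ c ∈ Finset.range j, MvPolynomial.C (r c) *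
      (MvPolynomial.X 0 ^ (j - c) * MvPolynomial.X 1 ^ c), fun z => ?_⟩
    rw [hU]
    simp
  · intro ξ
    rw [lap_eq_lev hUc.contDiffAt, ofReal_re]
    exact hUsub ξ
  · intro t _ z
    have : t • z = (t : ℂ) • z := by ext <;> simp
    rw [this, hFh]
  · intro δ hδ hδ1 z v
    have hκ2 : ContDiff ℝ 2 κ := hκ.of_le two_le_smooth
    have hW : ContDiff ℝ 2 (fun ξ => U ξ + -δ * κ ξ) := hUc.add (contDiff_const.mul hκ2)
    have e : (fun z => P z - δ * κ (F z)) = fun z => (fun ξ => U ξ + -δ * κ ξ) (F z) := by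
      funext z; rw [hPU]; ring
    rw [e]
    have hc : ContDiffAt ℝ 2 (fun z => (fun ξ => U ξ + -δ * κ ξ) (F z)) z :=
      (hW.comp (hFs.of_le two_le_smooth)).contDiffAt
    have h4 := leviForm_re_eq hc v
    rw [lev_comp (f := fun ξ => U ξ + -δ * κ ξ) hW.contDiffAt hF2.contDiffAt v] at h4
    have hv : fderiv ℂ F z v = fderiv ℂ F z v • (1 : ℂ) := by simp
    rw [hv, lev_smul, lev_add hUc (contDiff_const.mul hκ2), lev_const_mul hκ2] at h4
    have h5 : 0 ≤ lev U (F z) 1 + -δ * lev κ (F z) 1 := by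
      nlinarith [hκl (F z), hUsub (F z)]
    have h6 : 0 ≤ ‖fderiv ℂ F z v‖ ^ 2 * (lev U (F z) 1 + -δ * lev κ (F z) 1) := by positivity
    linarith

end
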